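/- Let X be a closed interval (a space homeomorphic to [0,1]) and let f : X → X be a continuous map with zero topological entropy. Then h_∞(f|_{ω(f)}) = h_∞(f|_{Ω(f)}) = h_∞(f|_{CR(f)}) = 0. -/

import Mathlib

open Set Filter Topology Function
open scoped ENNReal

/-- A subset of a topological space is an *arc* if it is homeomorphic to `[0,1]`. -/
def IsArc {X : Type*} [TopologicalSpace X] (A : Set X) : Prop :=
  Nonempty (A ≃ₜ Set.Icc (0 : ℝ) 1)

/-- A point `p` is an *endpoint* of the arc `A` if `p ∈ A` and `A \ {p}` is connected. -/
def IsArcEndpoint {X : Type*} [TopologicalSpace X] (A : Set X) (p : X) : Prop :=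
  p ∈ A ∧ IsConnected (A \ {p})

/-- A subset is a *simple closed curve* if it is homeomorphic to the unit circle. -/
def IsSimpleClosedCurve {X : Type*} [TopologicalSpace X] (S : Set X) : Prop :=
  Nonempty (S ≃ₜ Metric.sphere (0 : ℂ) 1)

/-- A *tree* is a compact connected metric space which is a union of finitely many arcs,
any two of which are disjoint or intersect only in (one or both of) their endpoints,
and which contains no simple closed curve. -/
def IsTree (X : Type*) [MetricSpace X] : Prop :=
  CompactSpace X ∧ ConnectedSpace X ∧
    (∃ 𝒜 : Finset (Set X), (∀ A ∈ 𝒜, IsArc A) ∧ ⋃₀ (𝒜 : Set (Set X)) = Set.univ ∧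
      ∀ A ∈ 𝒜, ∀ B ∈ 𝒜, A ≠ B → ∀ p ∈ A ∩ B, IsArcEndpoint A p ∧ IsArcEndpoint B p) ∧
    ∀ S : Set X, ¬ IsSimpleClosedCurve S

/-- A *dendrite* is a locally connected continuum containing no simple closed curve. -/
def IsDendrite (X : Type*) [MetricSpace X] : Prop :=
  CompactSpace X ∧ ConnectedSpace X ∧ LocallyConnectedSpace X ∧
    ∀ S : Set X, ¬ IsSimpleClosedCurve S

/-- `𝒰` is a finite open cover of the subset `Y`. -/
def IsOpenCoverOn {X : Type*} [TopologicalSpace X] (Y : Set X) (𝒰 : Finset (Set X)) : Prop :=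
  (∀ U ∈ 𝒰, IsOpen U) ∧ Y ⊆ ⋃₀ (𝒰 : Set (Set X))

/-- `N(⋁_{i=1}^n f^{-a_i}(𝒰))`, relative to the subset `Y`: the minimal number `m` of elements
of the join cover `⋁_{i=1}^n f^{-a_i}(𝒰)` needed to cover `Y`. -/
noncomputable def seqCoverCountOn {X : Type*} (f : X → X) (Y : Set X) (a : ℕ → ℕ)
    (𝒰 : Finset (Set X)) (n : ℕ) : ℕ :=
  sInf { m | ∃ c : Fin m → Fin n → Set X, (∀ j i, c j i ∈ 𝒰) ∧
    Y ⊆ ⋃ j, ⋂ i, f^[a i.1] ⁻¹' c j i }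

/-- Topological sequence entropy of `f` restricted to the (invariant) subset `Y`,
with respect to the sequence `a`. -/
noncomputable def seqEntropyOn {X : Type*} [TopologicalSpace X] (f : X → X) (Y : Set X)
    (a : ℕ → ℕ) : ℝ≥0∞ :=
  ⨆ (𝒰 : Finset (Set X)) (_ : IsOpenCoverOn Y 𝒰),
    Filter.limsup
      (fun n : ℕ => ENNReal.ofReal (Real.log (seqCoverCountOn f Y a 𝒰 n) / n)) Filter.atTop

/-- Topological sequence entropy of `f : X → X` with respect to the sequence `a`. -/
noncomputable def seqEntropy {X : Type*} [TopologicalSpace X] (f : X → X) (a : ℕ → ℕ) : ℝ≥0∞ :=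
  seqEntropyOn f Set.univ a

/-- The ordinary topological entropy `h(f)`, i.e. the sequence entropy for `A = (0,1,2,…)`. -/
noncomputable def topEntropy {X : Type*} [TopologicalSpace X] (f : X → X) : ℝ≥0∞ :=
  seqEntropy f id

/-- `h_∞(f|_Y)`: the supremum over all strictly increasing sequences of positive integers of
the topological sequence entropies of `f` restricted to `Y`. -/
noncomputable def supSeqEntropyOn {X : Type*} [TopologicalSpace X] (f : X → X) (Y : Set X) :
    ℝ≥0∞ :=
  ⨆ (a : ℕ → ℕ) (_ : StrictMono a) (_ : 1 ≤ a 0), seqEntropyOn f Y a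

/-- `h_∞(f)`: the supremum of the topological sequence entropies of `f`. -/
noncomputable def supSeqEntropy {X : Type*} [TopologicalSpace X] (f : X → X) : ℝ≥0∞ :=
  supSeqEntropyOn f Set.univ

/-- The ω-limit set `ω_f(x) = ⋂_n closure {f^k(x) : k ≥ n}`. -/
def omegaLimitSet {X : Type*} [TopologicalSpace X] (f : X → X) (x : X) : Set X :=
  ⋂ n : ℕ, closure ((fun k => f^[k] x) '' Set.Ici n)

/-- `ω(f) = ⋃_x ω_f(x)`. -/
def omegaSet {X : Type*} [TopologicalSpace X] (f : X → X) : Set X :=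
  ⋃ x : X, omegaLimitSet f x

/-- The non-wandering set `Ω(f)`. -/
def nonWanderingSet {X : Type*} [TopologicalSpace X] (f : X → X) : Set X :=
  { x | ∀ U : Set X, IsOpen U → x ∈ U → ∃ n, 1 ≤ n ∧ (f^[n] ⁻¹' U ∩ U).Nonempty }

/-- There is an ε-chain from `x` to `y` under `f`. -/
def EpsChain {X : Type*} [MetricSpace X] (f : X → X) (ε : ℝ) (x y : X) : Prop :=
  ∃ n, 1 ≤ n ∧ ∃ c : ℕ → X, c 0 = x ∧ c n = y ∧ ∀ i < n, dist (f (c i)) (c (i + 1)) < ε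

/-- The chain recurrent set `CR(f)`. -/
def chainRecurrentSet {X : Type*} [MetricSpace X] (f : X → X) : Set X :=
  { x | ∀ ε > 0, EpsChain f ε x x }

/-- The chain recurrent set of the restriction `f|_Y`: chain recurrence witnessed by
ε-chains lying entirely inside `Y`. -/
def chainRecurrentSetOn {X : Type*} [MetricSpace X] (f : X → X) (Y : Set X) : Set X :=
  { x ∈ Y | ∀ ε > 0, ∃ n, 1 ≤ n ∧ ∃ c : ℕ → X, c 0 = x ∧ c n = x ∧
      (∀ i ≤ n, c i ∈ Y) ∧ ∀ i < n, dist (f (c i)) (c (i + 1)) < ε }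

/-- `I` is a periodic arc of `f` of period `s`: an arc with `f^s(I) ⊆ I` whose iterates
`I, f(I), …, f^{s-1}(I)` are pairwise disjoint. -/
def IsPeriodicArc {X : Type*} [TopologicalSpace X] (f : X → X) (I : Set X) (s : ℕ) : Prop :=
  IsArc I ∧ 1 ≤ s ∧ Set.MapsTo f^[s] I I ∧
    ∀ i j, i < j → j < s → Disjoint (f^[i] '' I) (f^[j] '' I)

/-- `Orb_f(I) = I ∪ f(I) ∪ … ∪ f^{s-1}(I)`. -/
def arcOrbit {X : Type*} (f : X → X) (I : Set X) (s : ℕ) : Set X :=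
  ⋃ i ∈ Finset.range s, f^[i] '' I

/-- `I` is an independence set for the pair `(U, V)` under `f`. -/
def IsIndepSetPair {X : Type*} (f : X → X) (U V : Set X) (I : Finset ℕ) : Prop :=
  ∀ J ⊆ I, J.Nonempty → ∀ s : ℕ → Bool,
    (⋂ j ∈ J, f^[j] ⁻¹' (if s j then U else V)).Nonempty

/-- `(x, y)` is an IN-pair of `(X, f)`. -/
def INPair {X : Type*} [TopologicalSpace X] (f : X → X) (x y : X) : Prop :=
  ∀ U ∈ nhds x, ∀ V ∈ nhds y, ∀ m : ℕ, ∃ I : Finset ℕ, m ≤ I.card ∧ IsIndepSetPair f U V I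

/-- The set `IN(X, f)` of IN-pairs of `(X, f)`. -/
def INPairs {X : Type*} [TopologicalSpace X] (f : X → X) : Set (X × X) :=
  { p | INPair f p.1 p.2 }

/-- `(x, y)` is an IN-pair of the restricted (sub)system `(Y, f|_Y)`, for `Y` invariant. -/
def INPairOn {X : Type*} [TopologicalSpace X] (f : X → X) (Y : Set X) (x y : X) : Prop :=
  x ∈ Y ∧ y ∈ Y ∧ ∀ U ∈ nhds x, ∀ V ∈ nhds y, ∀ m : ℕ, ∃ I : Finset ℕ, m ≤ I.card ∧
    ∀ J ⊆ I, J.Nonempty → ∀ s : ℕ → Bool,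
      (Y ∩ ⋂ j ∈ J, f^[j] ⁻¹' (if s j then U else V)).Nonempty

/-- `(x, y)` is a Li–Yorke pair for `f`. -/
def LiYorkePair {X : Type*} [MetricSpace X] (f : X → X) (x y : X) : Prop :=
  Filter.liminf (fun n : ℕ => dist (f^[n] x) (f^[n] y)) Filter.atTop = 0 ∧
    0 < Filter.limsup (fun n : ℕ => dist (f^[n] x) (f^[n] y)) Filter.atTop

/-!
A continuous map of the interval with zero entropy has no horseshoe, and neither have its iterates.
Without horseshoes, every chain recurrent orbit that is not a fixed point alternates between the two
sides of some fixed point, and this holds for each iterate `f ^ 2 ^ v` as well.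

Record the itinerary of a chain recurrent point at times `a₁ < ⋯ < aₙ` with respect to a cut `c` by
the set of the times at which the orbit is on the right of `c`. Among any three times there is one
that cannot be opposed to the other two in both ways: comparing the times modulo powers of `2`, two
orbits doing so would, after passing to an iterate, alternate about fixed points and swap their
order, which forces a horseshoe. So the set of itineraries shatters no three times, and by
Sauer–Shelah there are only polynomially many itineraries. An open cover is resolved by finitely
many cuts; hence its cover counts grow polynomially, and every sequence entropy on `CR(f)` vanishes.

`Ω(f)` and `ω(f)` are closed invariant subsets of `CR(f)`. For `ω(f)` closedness is special to the
interval. If `c ∉ ω(f)` is a limit from the left of points of `ω(f)`, then a one-sided neighbourhood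
`[l, c)` meets its image under some `g = f ^ n` and never gets across `c`; the interval swept out by
its images under `g` shows that `g (g c) = c`, so `c ∈ ω(f)` after all.
-/

section Realization

variable {X : Type*} {f : X → X} {J : ℕ → Set X} {n : ℕ → ℕ}

theorem exists_iterate_mem_of_surjOn (h : ∀ k, SurjOn f^[n k] (J k) (J (k + 1))) (k : ℕ) :
    ∀ w ∈ J k, ∃ x, f^[∑ i ∈ Finset.range k, n i] x = w ∧
      ∀ j ≤ k, f^[∑ i ∈ Finset.range j, n i] x ∈ J j := by
  induction k with
  | zero => exact fun w hw => ⟨w, rfl, fun j hj => by simpa [Nat.le_zero.1 hj] using hw⟩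
  | succ k ih =>
    intro w hw
    obtain ⟨v, hv, rfl⟩ := h k hw
    obtain ⟨x, rfl, hx⟩ := ih v hv
    have hlast : f^[∑ i ∈ Finset.range (k + 1), n i] x =
        f^[n k] (f^[∑ i ∈ Finset.range k, n i] x) := by
      rw [Finset.sum_range_succ, add_comm, iterate_add_apply]
    refine ⟨x, hlast, fun j hj => ?_⟩
    obtain hj | rfl := Nat.le_succ_iff.1 hj
    · exact hx j hj
    · exact hlast ▸ hw

theorem exists_forall_iterate_mem_closure_of_surjOn [TopologicalSpace X] [CompactSpace X]
    (hf : Continuous f) (hJ : ∀ k, (J k).Nonempty) (h : ∀ k, SurjOn f^[n k] (J k) (J (k + 1))) :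
    ∃ x, ∀ k, f^[∑ i ∈ Finset.range k, n i] x ∈ closure (J k) := by
  let T : ℕ → Set X := fun k =>
    ⋂ j ≤ k, f^[∑ i ∈ Finset.range j, n i] ⁻¹' closure (J j)
  have hT_closed (k) : IsClosed (T k) :=
    isClosed_biInter fun j _ => isClosed_closure.preimage (hf.iterate _)
  have hT_nonempty (k) : (T k).Nonempty := by
    obtain ⟨w, hw⟩ := hJ k
    obtain ⟨x, -, hx⟩ := exists_iterate_mem_of_surjOn h k w hw
    exact ⟨x, mem_iInter₂.2 fun j hj => subset_closure (hx j hj)⟩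
  obtain ⟨x, hx⟩ := IsCompact.nonempty_iInter_of_sequence_nonempty_isCompact_isClosed T
    (fun k => biInter_subset_biInter_left fun j hj => Nat.le_succ_of_le hj) hT_nonempty
    (hT_closed 0).isCompact hT_closed
  exact ⟨x, fun k => mem_iInter₂.1 (mem_iInter.1 hx k) k le_rfl⟩

end Realization

section Horseshoe

variable {X : Type*}

section CoverCount

variable {f : X → X} {Y : Set X} {a : ℕ → ℕ} {𝒰 : Finset (Set X)} {n : ℕ}

theorem exists_cover_card_eq_seqCoverCountOn (hY : MapsTo f Y Y)
    (h𝒰 : Y ⊆ ⋃₀ (𝒰 : Set (Set X))) :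
    ∃ c : Fin (seqCoverCountOn f Y a 𝒰 n) → Fin n → Set X,
      (∀ j i, c j i ∈ 𝒰) ∧ Y ⊆ ⋃ j, ⋂ i, f^[a i.1] ⁻¹' c j i := by
  suffices h : {m | ∃ c : Fin m → Fin n → Set X, (∀ j i, c j i ∈ 𝒰) ∧
      Y ⊆ ⋃ j, ⋂ i, f^[a i.1] ⁻¹' c j i}.Nonempty from Nat.sInf_mem h
  let e := Fintype.equivFin (Fin n → 𝒰)
  refine ⟨Fintype.card (Fin n → 𝒰), fun j i => e.symm j i, fun j i => (e.symm j i).2,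
    fun y hy => ?_⟩
  choose U hU hyU using fun i : Fin n => h𝒰 (hY.iterate (a i) hy)
  refine mem_iUnion.2 ⟨e fun i => ⟨U i, hU i⟩, mem_iInter.2 fun i => ?_⟩
  simpa only [Equiv.symm_apply_apply, mem_preimage] using hyU i

theorem card_le_seqCoverCountOn {ι : Type*} [Fintype ι] (hY : MapsTo f Y Y)
    (h𝒰 : Y ⊆ ⋃₀ (𝒰 : Set (Set X))) {z : ι → X} (hz : ∀ s, z s ∈ Y)
    (hsep : ∀ s t, (∀ i < n, ∃ U ∈ 𝒰, f^[a i] (z s) ∈ U ∧ f^[a i] (z t) ∈ U) → s = t) :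
    Fintype.card ι ≤ seqCoverCountOn f Y a 𝒰 n := by
  obtain ⟨c, hc, hcover⟩ := exists_cover_card_eq_seqCoverCountOn (a := a) (n := n) hY h𝒰
  choose j hj using fun s => mem_iUnion.1 (hcover (hz s))
  have hj_inj : Injective j := fun s t hst => hsep s t fun i hi =>
    ⟨c (j s) ⟨i, hi⟩, hc _ _, mem_iInter.1 (hj s) ⟨i, hi⟩, hst ▸ mem_iInter.1 (hj t) ⟨i, hi⟩⟩
  simpa using Fintype.card_le_of_injective j hj_inj

theorem two_pow_le_seqCoverCountOn (hn : 0 < n) {P : Bool → Set X}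
    (h𝒰 : ∀ U ∈ 𝒰, ∃ b, U = (P b)ᶜ) (hcover : univ ⊆ ⋃₀ (𝒰 : Set (Set X)))
    (hne : ∀ b, (P b).Nonempty) (hP : ∀ b b', SurjOn f^[n] (P b) (P b')) (m : ℕ) :
    2 ^ m ≤ seqCoverCountOn f univ id 𝒰 (n * m) := by
  have hword (s : Fin m → Bool) : ∃ x, ∀ i, f^[n * i] x ∈ P (s i) := by
    let w : ℕ → Bool := fun i => if h : i < m then s ⟨i, h⟩ else true
    obtain ⟨x, -, hx⟩ := exists_iterate_mem_of_surjOn (f := f) (J := fun i => P (w i))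
      (n := fun _ => n) (fun i => hP _ _) m _ (hne _).some_mem
    exact ⟨x, fun i => by simpa [w, mul_comm] using hx i i.2.le⟩
  choose x hx using hword
  have hcard := card_le_seqCoverCountOn (a := id) (n := n * m) (mapsTo_univ f univ) hcover
    (fun s => mem_univ (x s)) fun s t h => funext fun i => ?_
  · simpa using hcard
  obtain ⟨U, hU, hsU, htU⟩ := h (n * i) (by gcongr; exact i.2)
  obtain ⟨b, rfl⟩ := h𝒰 U hU
  have hs : s i ≠ b := fun hb => hsU (hb ▸ hx s i)
  have ht : t i ≠ b := fun hb => htU (hb ▸ hx t i)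
  rw [Bool.eq_not_of_ne hs, Bool.eq_not_of_ne ht]

end CoverCount

variable [TopologicalSpace X]

/-- Some iterate of `f` has a (closed, disjoint) horseshoe: two disjoint closed sets each of which
it maps over both. The iterate is automatically a positive one. -/
def HasHorseshoe (f : X → X) : Prop :=
  ∃ (n : ℕ) (K L : Set X), IsClosed K ∧ IsClosed L ∧ Disjoint K L ∧ K.Nonempty ∧
    SurjOn f^[n] K (K ∪ L) ∧ SurjOn f^[n] L (K ∪ L)

variable {f : X → X}

theorem HasHorseshoe.of_iterate {k : ℕ} : HasHorseshoe f^[k] → HasHorseshoe f := by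
  rintro ⟨n, K, L, hK, hL, hKL, hne, hfK, hfL⟩
  rw [← iterate_mul] at hfK hfL
  exact ⟨k * n, K, L, hK, hL, hKL, hne, hfK, hfL⟩

/-- The two sets of the horseshoe are the points of `K` staying in `K`, and those moving to `L`. -/
theorem hasHorseshoe_of_loop {K L : Set X} {m : ℕ} (hf : Continuous f) (hK : IsClosed K)
    (hL : IsClosed L) (hKL : Disjoint K L) (hne : K.Nonempty) (hKK : SurjOn f K K)
    (hfKL : SurjOn f K L) (hLK : SurjOn f^[m] L K) : HasHorseshoe f := by
  have hKm (n : ℕ) : SurjOn f^[n] K K := hKK.iterate n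
  have surjOn_inter {S : Set X} (hS : SurjOn f K S) : SurjOn f (K ∩ f ⁻¹' S) S := by
    intro y hy
    obtain ⟨x, hx, rfl⟩ := hS hy
    exact ⟨x, ⟨hx, hy⟩, rfl⟩
  have hstay : SurjOn f^[m + 1] (K ∩ f ⁻¹' K) K := (hKm m).comp (surjOn_inter hKK)
  have hmove : SurjOn f^[m + 1] (K ∩ f ⁻¹' L) K := hLK.comp (surjOn_inter hfKL)
  have hsub : K ∩ f ⁻¹' K ∪ K ∩ f ⁻¹' L ⊆ K := union_subset inter_subset_left inter_subset_left
  obtain ⟨z, hz, -⟩ := surjOn_inter hKK hne.some_mem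
  exact ⟨m + 1, K ∩ f ⁻¹' K, K ∩ f ⁻¹' L, hK.inter (hK.preimage hf), hK.inter (hL.preimage hf),
    ((hKL.preimage f).inter_left' _).inter_right' _, ⟨z, hz⟩, hstay.mono subset_rfl hsub,
    hmove.mono subset_rfl hsub⟩

theorem seqEntropyOn_ne_zero_of_two_pow_le {Y : Set X} {a : ℕ → ℕ} {𝒰 : Finset (Set X)}
    (h𝒰 : IsOpenCoverOn Y 𝒰) {n : ℕ} (hn : 0 < n)
    (h : ∀ m, 2 ^ m ≤ seqCoverCountOn f Y a 𝒰 (n * m)) : seqEntropyOn f Y a ≠ 0 := by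
  have hn' : (0 : ℝ) < n := Nat.cast_pos.2 hn
  have hterm (m : ℕ) (hm : 0 < m) :
      Real.log 2 / n ≤ Real.log (seqCoverCountOn f Y a 𝒰 (n * m)) / (n * m : ℕ) := by
    have hlog : m * Real.log 2 ≤ Real.log (seqCoverCountOn f Y a 𝒰 (n * m)) := by
      rw [← Real.log_pow]
      exact Real.log_le_log (by positivity) (mod_cast h m)
    rw [Nat.cast_mul, div_le_div_iff₀ hn' (mul_pos hn' (Nat.cast_pos.2 hm))]
    nlinarith
  have hfreq : ∃ᶠ N in atTop, ENNReal.ofReal (Real.log 2 / n) ≤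
      ENNReal.ofReal (Real.log (seqCoverCountOn f Y a 𝒰 N) / N) :=
    frequently_atTop.2 fun N => ⟨n * (N + 1), by nlinarith,
      ENNReal.ofReal_le_ofReal (hterm _ N.succ_pos)⟩
  have hle : ENNReal.ofReal (Real.log 2 / n) ≤ seqEntropyOn f Y a :=
    (le_limsup_of_frequently_le hfreq).trans (le_iSup₂ (α := ℝ≥0∞) 𝒰 h𝒰)
  exact ((ENNReal.ofReal_pos.2 (div_pos (Real.log_pos one_lt_two) hn')).trans_le hle).ne'

theorem HasHorseshoe.topEntropy_ne_zero (h : HasHorseshoe f) : topEntropy f ≠ 0 := by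
  classical
  obtain ⟨n, K, L, hK, hL, hKL, hne, hfK, hfL⟩ := h
  have hn : 0 < n := by
    rw [Nat.pos_iff_ne_zero]
    rintro rfl
    obtain ⟨x, hx⟩ := hne
    have hxL : x ∈ L := by simpa using hfL (Or.inl hx)
    exact disjoint_left.1 hKL hx hxL
  have hcover : IsOpenCoverOn univ ({Kᶜ, Lᶜ} : Finset (Set X)) :=
    ⟨by simp [hK, hL], fun x _ => by simpa [← not_and_or] using fun h => disjoint_left.1 hKL h⟩
  have hLne : L.Nonempty := (hne.mono subset_union_left |>.mono hfL).of_image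
  refine seqEntropyOn_ne_zero_of_two_pow_le hcover hn
    (two_pow_le_seqCoverCountOn (P := fun b => cond b K L) hn (by simp) hcover.2 ?_ ?_)
  · rintro (_ | _) <;> assumption
  · rintro (_ | _) (_ | _)
    exacts [hfL.mono subset_rfl subset_union_right, hfL.mono subset_rfl subset_union_left,
      hfK.mono subset_rfl subset_union_right, hfK.mono subset_rfl subset_union_left]

end Horseshoe

section Turbulence

variable {X : Type*} [ConditionallyCompleteLinearOrder X] [TopologicalSpace X] [OrderTopology X]
  [DenselyOrdered X] {f : X → X}

theorem surjOn_Icc_of_le_of_le {s : Set X} [s.OrdConnected] {x y p q : X} (hf : Continuous f)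
    (hx : x ∈ s) (hy : y ∈ s) (hp : f x ≤ p) (hq : q ≤ f y) : SurjOn f s (Icc p q) :=
  (hf.continuousOn.surjOn_Icc hx hy).mono subset_rfl (Icc_subset_Icc hp hq)

theorem hasHorseshoe_of_surjOn_Icc {a m b : X} (hf : Continuous f) (hab : a < b) (ham : a ≤ m)
    (hmb : m ≤ b) (hleft : SurjOn f (Icc a m) (Icc a b)) (hright : SurjOn f (Icc m b) (Icc a b)) :
    HasHorseshoe f := by
  have ha : a ∈ Icc a b := left_mem_Icc.2 hab.le
  have hb : b ∈ Icc a b := right_mem_Icc.2 hab.le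
  have not_surjOn_of_ge {u v : X} (huv : v ≤ u) : ¬ SurjOn f (Icc u v) (Icc a b) := fun h =>
    hab.ne (((subsingleton_Icc_of_ge huv).image f).anti h ha hb)
  have ham' : a < m := lt_of_not_ge fun h => not_surjOn_of_ge h hleft
  have hmb' : m < b := lt_of_not_ge fun h => not_surjOn_of_ge h hright
  obtain ⟨s, hs, hfs⟩ := hleft ha
  obtain ⟨t, ht, hft⟩ := hleft hb
  obtain ⟨r, hr, hfr⟩ : ∃ r ∈ uIcc s t, f r = m :=
    surjOn_Icc_of_le_of_le hf left_mem_uIcc right_mem_uIcc hfs.le hft.ge ⟨ham, hmb⟩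
  have har : a ≤ r := (le_inf hs.1 ht.1).trans hr.1
  have hrm : r < m := by
    refine (hr.2.trans (sup_le hs.2 ht.2)).lt_of_ne ?_
    rintro rfl
    rcases le_total s t with hst | hts
    · rw [uIcc_of_le hst] at hr
      exact hmb'.ne (by rw [← hft, ht.2.antisymm hr.2, hfr])
    · rw [uIcc_of_ge hts] at hr
      exact ham'.ne (by rw [← hfs, hs.2.antisymm hr.2, hfr])
  /- `f` maps `[r, s]` over `[a, m]` and `[r, t]` over `[m, b]`, hence `f^2` maps both over
  `[a, b]`; at least one of them avoids `m`. -/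
  obtain ⟨u, hu, hcov⟩ : ∃ u ∈ Ico a m, SurjOn f^[2] (uIcc u r) (Icc a b) := by
    by_cases hsm : s = m
    · have hts : t ≠ s := ne_of_apply_ne f (by rw [hfs, hft]; exact hab.ne')
      exact ⟨t, ⟨ht.1, ht.2.lt_of_ne (hsm ▸ hts)⟩, hright.comp
        (surjOn_Icc_of_le_of_le hf right_mem_uIcc left_mem_uIcc hfr.le hft.ge)⟩
    · exact ⟨s, ⟨hs.1, hs.2.lt_of_ne hsm⟩, hleft.comp
        (surjOn_Icc_of_le_of_le hf left_mem_uIcc right_mem_uIcc hfs.le hfr.ge)⟩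
  have hsub : uIcc u r ∪ Icc m b ⊆ Icc a b := union_subset
    (uIcc_subset_Icc ⟨hu.1, hu.2.le.trans hmb⟩ ⟨har, hrm.le.trans hmb⟩) (Icc_subset_Icc_left ham)
  refine ⟨2, uIcc u r, Icc m b, isClosed_Icc, isClosed_Icc,
    disjoint_left.2 fun x hx hx' => (hx.2.trans_lt (max_lt hu.2 hrm)).not_ge hx'.1,
    nonempty_uIcc, hcov.mono subset_rfl hsub, ?_⟩
  have hsquare : SurjOn f^[2] (Icc m b) (Icc a b) :=
    hright.comp (hright.mono subset_rfl (Icc_subset_Icc_left ham))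
  exact hsquare.mono subset_rfl hsub

end Turbulence

section NonWandering

variable {X : Type*} [TopologicalSpace X] {f : X → X}

theorem mapsTo_nonWanderingSet (hf : Continuous f) :
    MapsTo f (nonWanderingSet f) (nonWanderingSet f) := by
  intro x hx U hU hxU
  obtain ⟨n, hn, y, hyn, hy⟩ := hx _ (hU.preimage hf) hxU
  refine ⟨n, hn, f y, ?_, hy⟩
  rwa [mem_preimage, ← iterate_succ_apply, iterate_succ_apply']

theorem isClosed_nonWanderingSet : IsClosed (nonWanderingSet f) := by
  refine isClosed_of_closure_subset fun x hx U hU hxU => ?_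
  obtain ⟨z, hzU, hz⟩ := mem_closure_iff.1 hx U hU hxU
  exact hz U hU hzU

end NonWandering

section ChainRecurrence

variable {X : Type*} [MetricSpace X] {f : X → X} {x y z : X} {ε : ℝ}

theorem epsChain_iterate (hε : 0 < ε) {n : ℕ} (hn : 1 ≤ n) : EpsChain f ε z (f^[n] z) :=
  ⟨n, hn, fun i => f^[i] z, rfl, rfl, fun i _ => by simpa [iterate_succ_apply'] using hε⟩

theorem EpsChain.trans (hxy : EpsChain f ε x y) (hyz : EpsChain f ε y z) : EpsChain f ε x z := by
  obtain ⟨n, hn, c, rfl, rfl, hc⟩ := hxy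
  obtain ⟨m, hm, d, hd0, rfl, hd⟩ := hyz
  refine ⟨n + m, by lia, fun i => if i < n then c i else d (i - n), ?_, by simp, fun i hi => ?_⟩
  · simp [Nat.lt_of_succ_le hn]
  rcases lt_or_ge i n with hin | hni
  · have hjoin : (if i + 1 < n then c (i + 1) else d (i + 1 - n)) = c (i + 1) := by
      split_ifs with h
      · rfl
      · rw [show i + 1 = n by lia, Nat.sub_self, hd0]
    simpa only [hin, if_true, hjoin] using hc i hin
  · have h := hd (i - n) (by lia)
    rw [← Nat.sub_add_comm hni] at h
    simpa only [hni.not_gt, (Nat.le_succ_of_le hni).not_gt, if_false] using h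

theorem EpsChain.perturb (hf : UniformContinuous f) (hε : 0 < ε) :
    ∃ δ > 0, ∀ x u v y, dist x u < δ → dist v y < δ → EpsChain f δ u v → EpsChain f ε x y := by
  obtain ⟨η, hη, hfη⟩ := Metric.uniformContinuous_iff.1 hf (ε / 3) (by positivity)
  refine ⟨min η (ε / 3), by positivity, ?_⟩
  rintro x _ _ y hx hy ⟨n, hn, c, rfl, rfl, hc⟩
  let d : ℕ → X := fun i => if i = 0 then x else if i = n then y else c i
  have hd (i) : dist (d i) (c i) < min η (ε / 3) := by
    by_cases h0 : i = 0
    · simpa [d, h0] using hx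
    by_cases hin : i = n
    · simpa [d, hin, show n ≠ 0 by lia, dist_comm y] using hy
    · simpa [d, h0, hin] using ⟨hη, by positivity⟩
  refine ⟨n, hn, d, by simp [d], by simp [d, show n ≠ 0 by lia], fun i hi => ?_⟩
  calc dist (f (d i)) (d (i + 1))
      ≤ dist (f (d i)) (f (c i)) + dist (f (c i)) (c (i + 1)) + dist (c (i + 1)) (d (i + 1)) :=
        dist_triangle4 _ _ _ _
    _ < ε / 3 + ε / 3 + ε / 3 := by
        gcongr
        · exact hfη ((hd i).trans_le (min_le_left _ _))
        · exact (hc i hi).trans_le (min_le_right _ _)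
        · exact dist_comm (d _) _ ▸ (hd (i + 1)).trans_le (min_le_right _ _)
    _ = ε := by ring

theorem exists_periodic_pseudoOrbit (hx : x ∈ chainRecurrentSet f) (hε : 0 < ε) :
    ∃ (l : ℕ) (c : ℕ → X), 1 ≤ l ∧ c 0 = x ∧ Periodic c l ∧
      ∀ i, dist (f (c i)) (c (i + 1)) < ε := by
  obtain ⟨l, hl, c, h0, hcl, hc⟩ := hx ε hε
  refine ⟨l, fun i => c (i % l), hl, by simpa using h0, fun i => by simp, fun i => ?_⟩
  have hil := Nat.mod_lt i hl
  have hnext : c ((i + 1) % l) = c (i % l + 1) := by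
    rcases Nat.lt_or_eq_of_le (Nat.succ_le_of_lt hil) with h | h
    · rw [← Nat.mod_add_mod, Nat.mod_eq_of_lt h]
    · rw [← Nat.mod_add_mod, ← Nat.succ_eq_add_one, h, Nat.mod_self, h0, hcl]
  simpa only [hnext] using hc (i % l) hil

theorem exists_forall_dist_iterate_lt_of_pseudoOrbit (hf : UniformContinuous f) (n : ℕ)
    (hε : 0 < ε) :
    ∃ δ > 0, ∀ c : ℕ → X, (∀ i, dist (f (c i)) (c (i + 1)) < δ) →
      ∀ j, dist (f^[n] (c j)) (c (j + n)) < ε := by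
  induction n generalizing ε with
  | zero => exact ⟨1, one_pos, fun c _ j => by simpa using hε⟩
  | succ n ih =>
    obtain ⟨η, hη, hfη⟩ := Metric.uniformContinuous_iff.1 hf (ε / 2) (half_pos hε)
    obtain ⟨δ, hδ, h⟩ := ih hη
    refine ⟨min δ (ε / 2), by positivity, fun c hc j => ?_⟩
    calc dist (f^[n + 1] (c j)) (c (j + (n + 1)))
        ≤ dist (f (f^[n] (c j))) (f (c (j + n))) + dist (f (c (j + n))) (c (j + n + 1)) := by
          rw [iterate_succ_apply', ← add_assoc]
          exact dist_triangle _ _ _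
      _ < ε / 2 + ε / 2 := by
          gcongr
          · exact hfη (h c (fun i => (hc i).trans_le (min_le_left _ _)) j)
          · exact (hc _).trans_le (min_le_right _ _)
      _ = ε := add_halves ε

theorem chainRecurrentSet_subset_iterate (hf : UniformContinuous f) (n : ℕ) :
    chainRecurrentSet f ⊆ chainRecurrentSet f^[n] := by
  intro x hx ε hε
  obtain ⟨δ, hδ, h⟩ := exists_forall_dist_iterate_lt_of_pseudoOrbit hf n hε
  obtain ⟨l, c, hl, rfl, hper, hc⟩ := exists_periodic_pseudoOrbit hx hδ
  exact ⟨l, hl, fun i => c (i * n), by simp, by simpa [mul_comm] using hper.nat_mul_eq n,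
    fun i _ => by simpa [add_mul] using h c hc (i * n)⟩

theorem epsChain_iterate_self_of_mem_chainRecurrentSet (hf : UniformContinuous f)
    (hx : x ∈ chainRecurrentSet f) (k : ℕ) (hε : 0 < ε) : EpsChain f ε (f^[k] x) x := by
  obtain ⟨δ, hδ, hperturb⟩ := EpsChain.perturb hf hε
  obtain ⟨η, hη, h⟩ := exists_forall_dist_iterate_lt_of_pseudoOrbit hf k hδ
  obtain ⟨l, c, hl, rfl, hper, hc⟩ := exists_periodic_pseudoOrbit hx (lt_min hδ hη)
  have hkl : k + 1 ≤ l * (k + 1) := Nat.le_mul_of_pos_left _ hl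
  refine hperturb _ (c k) (c 0) _
    (by simpa using h c (fun i => (hc i).trans_le (min_le_right _ _)) 0) (by simpa using hδ)
    ⟨l * (k + 1) - k, by lia, fun i => c (k + i), rfl, ?_,
      fun i _ => (hc _).trans_le (min_le_left _ _)⟩
  have hlast : k + (l * (k + 1) - k) = (k + 1) • l := by
    rw [Nat.add_sub_cancel' (by lia), mul_comm, smul_eq_mul]
  simpa only [hlast] using hper.nsmul_eq (k + 1)

theorem mapsTo_chainRecurrentSet (hf : UniformContinuous f) :
    MapsTo f (chainRecurrentSet f) (chainRecurrentSet f) := fun _ hx _ hε =>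
  (epsChain_iterate_self_of_mem_chainRecurrentSet hf hx 1 hε).trans
    (epsChain_iterate hε (n := 1) le_rfl)

theorem isClosed_chainRecurrentSet (hf : UniformContinuous f) :
    IsClosed (chainRecurrentSet f) := by
  refine isClosed_of_closure_subset fun x hx ε hε => ?_
  obtain ⟨δ, hδ, hperturb⟩ := EpsChain.perturb hf hε
  obtain ⟨z, hz, hxz⟩ := Metric.mem_closure_iff.1 hx δ hδ
  exact hperturb x z z x hxz (dist_comm x z ▸ hxz) (hz δ hδ)

theorem mem_of_mapsTo_of_mem_chainRecurrentSet (hf : UniformContinuous f) {K U : Set X}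
    (hK : IsCompact K) (hU : IsOpen U) (hUK : U ⊆ K) (hKU : MapsTo f K U)
    (hx : x ∈ chainRecurrentSet f) {k : ℕ} (hk : f^[k] x ∈ K) : x ∈ U := by
  obtain ⟨ε, hε, hεU⟩ :=
    (hK.image hf.continuous).exists_thickening_subset_open hU hKU.image_subset
  obtain ⟨n, hn, c, hc0, rfl, hc⟩ := epsChain_iterate_self_of_mem_chainRecurrentSet hf hx k hε
  have step {i} (hi : i < n) (hci : c i ∈ K) : c (i + 1) ∈ U :=
    hεU (Metric.mem_thickening_iff.2 ⟨f (c i), mem_image_of_mem f hci, by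
      simpa only [dist_comm] using hc i hi⟩)
  have hmem (i) (hi : i ≤ n) : c i ∈ K := by
    induction i with
    | zero => exact hc0 ▸ hk
    | succ i ih => exact hUK (step hi (ih (by lia)))
  obtain ⟨m, rfl⟩ := Nat.exists_eq_add_of_le' hn
  exact step m.lt_succ_self (hmem m m.le_succ)

theorem nonWanderingSet_subset_chainRecurrentSet (hf : UniformContinuous f) :
    nonWanderingSet f ⊆ chainRecurrentSet f := by
  intro x hx ε hε
  obtain ⟨δ, hδ, hperturb⟩ := EpsChain.perturb hf hε
  obtain ⟨n, hn, y, hyn, hy⟩ := hx _ Metric.isOpen_ball (Metric.mem_ball_self hδ)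
  exact hperturb x y _ x (Metric.mem_ball'.1 hy) hyn (epsChain_iterate hδ hn)

end ChainRecurrence

section OrderDual

variable {X : Type*} [MetricSpace X]

/-! These instances concern the topology of the metric space `Xᵒᵈ`; instance search does not
recognise it as the topology that `Xᵒᵈ` inherits from that of `X`. -/

instance instCompactSpaceMetricOrderDual [CompactSpace X] : CompactSpace Xᵒᵈ :=
  ‹CompactSpace X›

instance instOrderTopologyMetricOrderDual [LinearOrder X] [OrderTopology X] :
    OrderTopology Xᵒᵈ :=
  instOrderTopologyOrderDual

end OrderDual

section Alternation

theorem exists_first_eq {X Y : Type*} [ConditionallyCompleteLinearOrder X] [TopologicalSpace X]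
    [OrderTopology X] [DenselyOrdered X] [LinearOrder Y] [TopologicalSpace Y]
    [OrderClosedTopology Y] {f g : X → Y} {a b : X} (hf : Continuous f) (hg : Continuous g)
    (hab : a ≤ b) (ha : g a < f a) (hb : f b ≤ g b) :
    ∃ p ∈ Ioc a b, f p = g p ∧ ∀ z ∈ Ico a p, g z < f z := by
  obtain ⟨p, ⟨hpab, hfp⟩, hleast⟩ :=
    (isCompact_Icc.inter_right (isClosed_le hf hg)).exists_isLeast ⟨b, right_mem_Icc.2 hab, hb⟩
  have hlt : ∀ z ∈ Ico a p, g z < f z := fun z hz => lt_of_not_ge fun h =>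
    hz.2.not_ge (hleast ⟨⟨hz.1, hz.2.le.trans hpab.2⟩, h⟩)
  have hap : a < p := hpab.1.lt_of_ne fun h => (h ▸ ha).not_ge hfp
  obtain ⟨q, hq, hfq⟩ := isPreconnected_Icc.intermediate_value₂ (right_mem_Icc.2 hap.le)
    (left_mem_Icc.2 hap.le) hf.continuousOn hg.continuousOn hfp ha.le
  have hqp : q = p := hq.2.antisymm (hleast ⟨⟨hq.1, hq.2.trans hpab.2⟩, hfq.le⟩)
  exact ⟨p, ⟨hap, hpab.2⟩, hqp ▸ hfq, hlt⟩

section NoHorseshoe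

variable {X : Type*} [ConditionallyCompleteLinearOrder X] [TopologicalSpace X] [OrderTopology X]
  [DenselyOrdered X] {f : X → X} {x y p w c : X}

theorem lt_apply_of_first_return (hf : Continuous f) (hh : ¬ HasHorseshoe f) (hxp : x < p)
    (hpy : p < y) (hfp : f p = p) (hfy : f y = x) (hc : c ∈ Icc x y) (hyc : y ≤ f c) :
    p < f x := by
  have hcp : c < p := by
    refine lt_of_not_ge fun hpc => hh (hasHorseshoe_of_surjOn_Icc hf hpy hpc hc.2 ?_ ?_)
    · exact surjOn_Icc_of_le_of_le hf (left_mem_Icc.2 hpc) (right_mem_Icc.2 hpc) hfp.le hyc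
    · exact surjOn_Icc_of_le_of_le hf (right_mem_Icc.2 hc.2) (left_mem_Icc.2 hc.2)
        (hfy.trans_le hxp.le) hyc
  refine lt_of_not_ge fun hfx => hh (HasHorseshoe.of_iterate (k := 2) ?_)
  have hdown : SurjOn f (Icc p y) (Icc x p) := surjOn_Icc_of_le_of_le hf (right_mem_Icc.2 hpy.le)
    (left_mem_Icc.2 hpy.le) hfy.le hfp.ge
  refine hasHorseshoe_of_surjOn_Icc (hf.iterate 2) hxp hc.1 hcp.le
    (hdown.comp ?_) (hdown.comp ?_)
  · exact surjOn_Icc_of_le_of_le hf (left_mem_Icc.2 hc.1) (right_mem_Icc.2 hc.1) hfx hyc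
  · exact surjOn_Icc_of_le_of_le hf (right_mem_Icc.2 hcp.le) (left_mem_Icc.2 hcp.le) hfp.le hyc

theorem exists_forall_Icc_lt (hf : Continuous f) (hh : ¬ HasHorseshoe f) (hfp : f p = p)
    (hpw : p < w) (hfw : f w = p) :
    ∃ d ≤ p, (∃ δ ∈ Icc p w, f δ = d) ∧ (∀ z ∈ Icc p w, d ≤ f z) ∧ ∀ z ∈ Icc d w, f z < w := by
  have hp : p ∈ Icc p w := left_mem_Icc.2 hpw.le
  obtain ⟨δ, hδ, hmin⟩ := isCompact_Icc.exists_isMinOn ⟨p, hp⟩ hf.continuousOn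
  have hδp : f δ ≤ p := (hmin hp).trans_eq hfp
  refine ⟨f δ, hδp, ⟨δ, hδ, rfl⟩, fun z hz => hmin hz, fun z hz => lt_of_not_ge fun hwz => hh ?_⟩
  rcases le_total p z with hpz | hzp
  · refine hasHorseshoe_of_surjOn_Icc hf hpw hpz hz.2 ?_ ?_
    · exact surjOn_Icc_of_le_of_le hf (left_mem_Icc.2 hpz) (right_mem_Icc.2 hpz) hfp.le hwz
    · exact surjOn_Icc_of_le_of_le hf (right_mem_Icc.2 hz.2) (left_mem_Icc.2 hz.2) hfw.le hwz
  · have hup : SurjOn f (Icc (f δ) p) (Icc p w) :=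
      surjOn_Icc_of_le_of_le hf (right_mem_Icc.2 hδp) ⟨hz.1, hzp⟩ hfp.le hwz
    refine HasHorseshoe.of_iterate (k := 2) (hasHorseshoe_of_surjOn_Icc (hf.iterate 2) hpw hδ.1 hδ.2
      (hup.comp ?_) (hup.comp ?_))
    · exact surjOn_Icc_of_le_of_le hf (right_mem_Icc.2 hδ.1) (left_mem_Icc.2 hδ.1) le_rfl hfp.ge
    · exact surjOn_Icc_of_le_of_le hf (left_mem_Icc.2 hδ.2) (right_mem_Icc.2 hδ.2) le_rfl hfw.ge

end NoHorseshoe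

variable {X : Type*} [ConditionallyCompleteLinearOrder X] [DenselyOrdered X] [MetricSpace X]
  [OrderTopology X] [CompactSpace X] {f : X → X} {x y p w : X}

theorem exists_first_return (hf : Continuous f) (hx : x ∈ chainRecurrentSet f) (hxf : x < f x) :
    ∃ y, x < y ∧ f y = x ∧ (∀ z ∈ Ico x y, x < f z) ∧ ∃ c ∈ Icc x y, y ≤ f c := by
  have hf' := CompactSpace.uniformContinuous_of_continuous hf
  obtain ⟨b, hxb, hfb⟩ : ∃ b ∈ Ici x, f b ≤ x := by
    by_contra! h
    exact lt_irrefl x (mem_of_mapsTo_of_mem_chainRecurrentSet hf' isClosed_Ici.isCompact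
      isOpen_Ioi Ioi_subset_Ici_self h hx (k := 0) self_mem_Ici)
  obtain ⟨y, hy, hfy, hlt⟩ := exists_first_eq hf continuous_const hxb hxf hfb
  refine ⟨y, hy.1, hfy, hlt, ?_⟩
  by_contra! h
  obtain ⟨M, hM, hfM⟩ := isCompact_Icc.exists_isMaxOn (nonempty_Icc.2 hy.1.le) hf.continuousOn
  obtain ⟨y', hMy', hy'y⟩ := exists_between (h M hM)
  have hxy' : x < y' := (hxf.trans_le (hfM (left_mem_Icc.2 hy.1.le))).trans hMy'
  have hmaps : MapsTo f (Icc x y') (Ioo x y') := fun z hz =>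
    ⟨hlt z ⟨hz.1, hz.2.trans_lt hy'y⟩, (hfM ⟨hz.1, hz.2.trans hy'y.le⟩).trans_lt hMy'⟩
  exact lt_irrefl x (mem_of_mapsTo_of_mem_chainRecurrentSet hf' isCompact_Icc isOpen_Ioo
    Ioo_subset_Icc_self hmaps hx (k := 0) (left_mem_Icc.2 hxy'.le)).1

theorem lt_apply_of_apply_eq (hf : Continuous f) (hh : ¬ HasHorseshoe f)
    (hx : x ∈ chainRecurrentSet f) (hfp : f p = p) (hpx : p < f x)
    (hup : ∀ z ∈ Ico x p, z < f z) (hpw : p < w) (hfw : f w = p)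
    (hxw : ∀ z ∈ Icc p w, x < f z) : w < f x := by
  by_contra! hfxw
  obtain ⟨d, hdp, ⟨δ, hδ, hfδ⟩, hdf, hfw'⟩ := exists_forall_Icc_lt hf hh hfp hpw hfw
  have hxd : x < d := hfδ ▸ hxw δ hδ
  obtain ⟨l, hl, hlw⟩ := exists_Ioc_subset_of_mem_nhds
    ((isOpen_Iio.preimage hf).mem_nhds (hfw' d (left_mem_Icc.2 (hdp.trans hpw.le)))) ⟨x, hxd⟩
  obtain ⟨d', hd', hd'd⟩ := exists_between (max_lt hl hxd)
  obtain ⟨hld', hxd'⟩ := max_lt_iff.1 hd'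
  have hmaps : MapsTo f (Icc d' w) (Ioo d' w) := by
    refine fun z hz => ⟨?_, ?_⟩
    · rcases lt_or_ge z p with hzp | hpz
      · exact hz.1.trans_lt (hup z ⟨hxd'.le.trans hz.1, hzp⟩)
      · exact hd'd.trans_le (hdf z ⟨hpz, hz.2⟩)
    · rcases le_total z d with hzd | hdz
      · exact hlw ⟨hld'.trans_le hz.1, hzd⟩
      · exact hfw' z ⟨hdz, hz.2⟩
  have hmem := mem_of_mapsTo_of_mem_chainRecurrentSet
    (CompactSpace.uniformContinuous_of_continuous hf) isCompact_Icc isOpen_Ioo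
    Ioo_subset_Icc_self hmaps hx (k := 1) ⟨(hd'd.le.trans hdp).trans hpx.le, hfxw⟩
  exact hxd'.not_gt hmem.1

theorem exists_isLeast_isFixedPt_and_lt (hf : Continuous f) (hh : ¬ HasHorseshoe f)
    (hx : x ∈ chainRecurrentSet f) (hxf : x < f x) :
    ∃ p, IsLeast {q | IsFixedPt f q ∧ x < q} p ∧ p < f x ∧ f (f x) < p := by
  obtain ⟨y, hxy, hfy, hlt, c, hc, hyc⟩ := exists_first_return hf hx hxf
  obtain ⟨p, ⟨hxp, hpy⟩, hfp, hup⟩ :=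
    exists_first_eq hf continuous_id hxy.le hxf (hfy.trans_le hxy.le)
  have hpy : p < y := hpy.lt_of_ne fun h => hxy.ne (by rw [← hfy, ← h, hfp, h, id])
  have hpx : p < f x := lt_apply_of_first_return hf hh hxp hpy hfp hfy hc hyc
  refine ⟨p, ⟨⟨hfp, hxp⟩, fun q hq => le_of_not_gt fun h => ?_⟩, hpx, ?_⟩
  · exact (hup q ⟨hq.2.le, h⟩).ne' hq.1
  by_contra! hpfx
  rcases le_or_gt y (f x) with hyx | hxy'
  · have hover : SurjOn f (Icc x p) (Icc p (f x)) := surjOn_Icc_of_le_of_le hf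
      (right_mem_Icc.2 hxp.le) (left_mem_Icc.2 hxp.le) hfp.le le_rfl
    refine hh (HasHorseshoe.of_iterate (k := 2) (hasHorseshoe_of_surjOn_Icc (hf.iterate 2) hpx
      hpy.le hyx (hover.comp ?_) (hover.comp ?_)))
    · exact surjOn_Icc_of_le_of_le hf (right_mem_Icc.2 hpy.le) (left_mem_Icc.2 hpy.le) hfy.le
        hfp.ge
    · exact surjOn_Icc_of_le_of_le hf (left_mem_Icc.2 hyx) (right_mem_Icc.2 hyx) hfy.le hpfx
  · obtain ⟨w, hw, hfw⟩ : ∃ w ∈ Icc (f x) y, f w = p := surjOn_Icc_of_le_of_le hf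
      (right_mem_Icc.2 hxy'.le) (left_mem_Icc.2 hxy'.le) hfy.le hpfx ⟨hxp.le, le_rfl⟩
    have hwy : w < y := hw.2.lt_of_ne fun h => hxp.ne (by rw [← hfy, ← h, hfw])
    refine hw.1.not_gt (lt_apply_of_apply_eq hf hh hx hfp hpx hup (hpx.trans_le hw.1) hfw ?_)
    exact fun z hz => hlt z ⟨hxp.le.trans hz.1, hz.2.trans_lt hwy⟩

theorem exists_isGreatest_isFixedPt_and_lt (hf : Continuous f) (hh : ¬ HasHorseshoe f)
    (hx : x ∈ chainRecurrentSet f) (hxf : f x < x) :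
    ∃ p, IsGreatest {q | IsFixedPt f q ∧ q < x} p ∧ f x < p ∧ p < f (f x) :=
  exists_isLeast_isFixedPt_and_lt (X := Xᵒᵈ) hf hh hx hxf

end Alternation

section AlternatesAbout

/-- The orbit of `x` jumps at every step from one side of `q` to the other. -/
def AlternatesAbout {X : Type*} [LT X] (f : X → X) (q x : X) : Prop :=
  ∀ k, (f^[k] x < q ∧ q < f^[k + 1] x) ∨ (q < f^[k] x ∧ f^[k + 1] x < q)

namespace AlternatesAbout

variable {X : Type*} [LinearOrder X] {f : X → X} {q x : X} {i j k : ℕ}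

theorem iterate (h : AlternatesAbout f q x) (n : ℕ) : AlternatesAbout f q (f^[n] x) := fun k => by
  simpa only [← iterate_add_apply, add_right_comm] using h (k + n)

theorem iterate_ne (h : AlternatesAbout f q x) (k : ℕ) : f^[k] x ≠ q :=
  (h k).elim (fun hk => hk.1.ne) fun hk => hk.1.ne'

theorem iterate_lt_iff (h : AlternatesAbout f q x) : ∀ k, f^[k] x < q ↔ (Even k ↔ x < q)
  | 0 => by simp
  | k + 1 => by
    have hstep : f^[k + 1] x < q ↔ ¬ f^[k] x < q := (h k).elim
      (fun hk => iff_of_false hk.2.not_gt (not_not.2 hk.1))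
      fun hk => iff_of_true hk.2 hk.1.not_gt
    rw [hstep, h.iterate_lt_iff k, Nat.even_add_one]
    tauto

theorem lt_iterate_iff (h : AlternatesAbout f q x) (k : ℕ) :
    q < f^[k] x ↔ ¬ (Even k ↔ x < q) := by
  rw [← h.iterate_lt_iff, not_lt, (h.iterate_ne k).symm.le_iff_lt]

theorem iterate_lt_of_odd_of_even (h : AlternatesAbout f q x) (hij : Odd (i + j))
    (hjk : Even (j + k)) (hlt : f^[k] x < f^[i] x) : f^[j] x < q := by
  by_contra hj
  have hi : f^[i] x < q := by
    rw [h.iterate_lt_iff] at hj ⊢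
    rw [Nat.odd_add] at hij
    rw [← Nat.not_even_iff_odd] at hij
    tauto
  have hk : q < f^[k] x := by
    rw [h.iterate_lt_iff] at hj
    rw [h.lt_iterate_iff]
    rwa [← Nat.even_add.1 hjk]
  exact hlt.not_gt (hi.trans hk)

theorem lt_iterate_of_odd_of_even (h : AlternatesAbout f q x) (hij : Odd (i + j))
    (hjk : Even (j + k)) (hlt : f^[i] x < f^[k] x) : q < f^[j] x :=
  iterate_lt_of_odd_of_even (X := Xᵒᵈ) (fun k => (h k).symm) hij hjk hlt

end AlternatesAbout

section ChainRecurrent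

variable {X : Type*} [ConditionallyCompleteLinearOrder X] [DenselyOrdered X] [MetricSpace X]
  [OrderTopology X] [CompactSpace X] {f : X → X} {x q z : X}

theorem apply_apply_lt_of_isFixedPt (hf : Continuous f) (hh : ¬ HasHorseshoe f)
    (hz : z ∈ chainRecurrentSet f) (hq : IsFixedPt f q) (hzq : z < q) (hqz : q < f z) :
    f (f z) < q := by
  obtain ⟨p, hp, -, hlt⟩ := exists_isLeast_isFixedPt_and_lt hf hh hz (hzq.trans hqz)
  exact hlt.trans_le (hp.2 ⟨hq, hzq⟩)

theorem alternatesAbout_of_lt (hf : Continuous f) (hh : ¬ HasHorseshoe f)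
    (hx : x ∈ chainRecurrentSet f) (hq : IsFixedPt f q) (hxq : x < q) (hqx : q < f x) :
    AlternatesAbout f q x := by
  have hmem k : f^[k] x ∈ chainRecurrentSet f := (mapsTo_chainRecurrentSet
    (CompactSpace.uniformContinuous_of_continuous hf)).iterate k hx
  intro k
  induction k with
  | zero => exact Or.inl ⟨hxq, hqx⟩
  | succ k ih =>
    simp only [iterate_succ_apply'] at ih hmem ⊢
    rcases ih with ⟨hlt, hgt⟩ | ⟨hgt, hlt⟩
    · exact Or.inr ⟨hgt, apply_apply_lt_of_isFixedPt hf hh (hmem k) hq hlt hgt⟩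
    · exact Or.inl ⟨hlt, apply_apply_lt_of_isFixedPt (X := Xᵒᵈ) hf hh (hmem k) hq hgt hlt⟩

theorem exists_isFixedPt_alternatesAbout (hf : Continuous f) (hh : ¬ HasHorseshoe f)
    (hx : x ∈ chainRecurrentSet f) (hfx : f x ≠ x) :
    ∃ q, IsFixedPt f q ∧ AlternatesAbout f q x := by
  rcases hfx.lt_or_gt with hlt | hlt
  · obtain ⟨q, hq, hfxq, -⟩ := exists_isGreatest_isFixedPt_and_lt hf hh hx hlt
    have halt := alternatesAbout_of_lt (X := Xᵒᵈ) hf hh hx hq.1.1 hq.1.2 hfxq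
    exact ⟨q, hq.1.1, fun k => (halt k).symm⟩
  · obtain ⟨q, hq, hqfx, -⟩ := exists_isLeast_isFixedPt_and_lt hf hh hx hlt
    exact ⟨q, hq.1.1, alternatesAbout_of_lt hf hh hx hq.1.1 hq.1.2 hqfx⟩

end ChainRecurrent

end AlternatesAbout

section Separation

section Topological

variable {X : Type*} [ConditionallyCompleteLinearOrder X] [TopologicalSpace X] [OrderTopology X]
  [DenselyOrdered X] {f : X → X} {p q u v : X} {m n : ℕ}

theorem hasHorseshoe_of_iterate_apply_le (hf : Continuous f) (hp : IsFixedPt f p) (hvu : v ≤ u)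
    (hup : u < p) (hpu : p ≤ f u) (hv : f v ≤ v) (hm : f^[m] (f u) ≤ v) : HasHorseshoe f := by
  have hv' : v ∈ Icc v u := left_mem_Icc.2 hvu
  have hu' : u ∈ Icc v u := right_mem_Icc.2 hvu
  refine hasHorseshoe_of_loop (m := m) hf (K := Icc v u) (L := Icc p (f u)) isClosed_Icc
    isClosed_Icc ?_ ⟨v, hv'⟩ ?_ ?_ ?_
  · exact disjoint_left.2 fun z hz hz' => (hup.trans_le hz'.1).not_ge hz.2
  · exact surjOn_Icc_of_le_of_le hf hv' hu' hv (hup.le.trans hpu)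
  · exact surjOn_Icc_of_le_of_le hf hv' hu' (hv.trans (hvu.trans hup.le)) le_rfl
  · exact surjOn_Icc_of_le_of_le (hf.iterate m) (right_mem_Icc.2 hpu) (left_mem_Icc.2 hpu) hm
      (hup.le.trans_eq (iterate_fixed hp m).symm)

theorem hasHorseshoe_of_alternatesAbout (hf : Continuous f) (hp : IsFixedPt f p)
    (hq : IsFixedPt f q) (hu : AlternatesAbout f p u) (hv : AlternatesAbout f q v) (hup : u < p)
    (hqv : q < v) (hn : Even n) (hn0 : n ≠ 0) (hvu : v < u) (hlt : f^[n] u < f^[n] v) :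
    HasHorseshoe f := by
  obtain ⟨m, rfl⟩ := Nat.exists_eq_succ_of_ne_zero hn0
  have hpu : p < f u := (hu.lt_iterate_iff 1).2 (by simp [hup])
  have hvq : f v < q := (hv.iterate_lt_iff 1).2 (by simp [hqv.not_gt])
  have hpu' : p < f (f^[m + 1] u) := by
    rw [← iterate_succ_apply' f, hu.lt_iterate_iff]
    simp [hn, hup, Nat.even_add_one (n := m + 1)]
  have hvq' : f (f^[m + 1] v) < q := by
    rw [← iterate_succ_apply' f, hv.iterate_lt_iff]
    simp [hn, hqv.not_gt, Nat.even_add_one (n := m + 1)]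
  rcases le_or_gt (f^[m + 1] u) v with huv | hvu'
  · exact hasHorseshoe_of_iterate_apply_le hf hp hvu.le hup hpu.le (hvq.trans hqv).le huv
  rcases le_or_gt u (f^[m + 1] v) with huv | hvu''
  · exact hasHorseshoe_of_iterate_apply_le (X := Xᵒᵈ) hf hq hvu.le hqv hvq.le (hup.trans hpu).le huv
  have hsub : Icc v (f^[m + 1] u) ∪ Icc (f^[m + 1] v) u ⊆ Icc v u :=
    union_subset (Icc_subset_Icc_right (hlt.trans hvu'').le)
      (Icc_subset_Icc_left (hvu'.trans hlt).le)
  refine ⟨1, _, _, isClosed_Icc, isClosed_Icc, ?_, nonempty_Icc.2 hvu'.le,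
    (surjOn_Icc_of_le_of_le hf ?_ ?_ (hvq.trans hqv).le (hup.trans hpu').le).mono subset_rfl hsub,
    (surjOn_Icc_of_le_of_le hf ?_ ?_ (hvq'.trans hqv).le (hup.trans hpu).le).mono subset_rfl hsub⟩
  · exact disjoint_left.2 fun z hz hz' => (hlt.trans_le hz'.1).not_ge hz.2
  all_goals first | exact left_mem_Icc.2 (by order) | exact right_mem_Icc.2 (by order)

end Topological

/-- For some `v`, the times `i`, `j`, `k` are congruent modulo `2 ^ v`, and modulo `2 ^ (v + 1)`
the times `j < k` agree while `i` differs from them. At such times two chain recurrent orbits of a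
map without horseshoe cannot be separated by a cut in opposite ways, with time `k` opposed to `i`
and `j`. -/
def IsDyadicTriple (i j k : ℕ) : Prop :=
  ∃ v m d e₁ e₂ : ℕ, i = m + 2 ^ v * d ∧ j = m + 2 ^ v * e₁ ∧ k = m + 2 ^ v * e₂ ∧
    Odd (d + e₁) ∧ Even (e₁ + e₂) ∧ e₁ < e₂

variable {i j k : ℕ}

theorem IsDyadicTriple.two_mul_add (h : IsDyadicTriple i j k) (r : ℕ) :
    IsDyadicTriple (2 * i + r) (2 * j + r) (2 * k + r) := by
  obtain ⟨v, m, d, e₁, e₂, rfl, rfl, rfl, h⟩ := h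
  exact ⟨v + 1, 2 * m + r, d, e₁, e₂, by ring, by ring, by ring, h⟩

theorem isDyadicTriple_of_odd_of_even (hij : Odd (i + j)) (hjk : Even (j + k)) (h : j < k) :
    IsDyadicTriple i j k :=
  ⟨0, 0, i, j, k, by simp, by simp, by simp, hij, hjk, h⟩

theorem isDyadicTriple_or_of_lt_of_lt (hij : i < j) (hjk : j < k) :
    IsDyadicTriple i j k ∨ IsDyadicTriple j i k ∨ IsDyadicTriple k i j := by
  induction k using Nat.strong_induction_on generalizing i j with
  | _ k ih =>
    by_cases hij' : Odd (i + j)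
    · by_cases hjk' : Even (j + k)
      · exact .inl (isDyadicTriple_of_odd_of_even hij' hjk' hjk)
      · refine .inr (.inl (isDyadicTriple_of_odd_of_even (add_comm i j ▸ hij') ?_ (hij.trans hjk)))
        grind
    by_cases hjk' : Even (j + k)
    · have hi : i = 2 * (i / 2) + i % 2 := by omega
      have hj : j = 2 * (j / 2) + i % 2 := by grind
      have hk : k = 2 * (k / 2) + i % 2 := by grind
      rw [hi, hj, hk]
      exact (ih (k / 2) (by omega) (i := i / 2) (j := j / 2) (by omega) (by omega)).imp
        (·.two_mul_add _) (.imp (·.two_mul_add _) (·.two_mul_add _))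
    · exact .inr (.inr (isDyadicTriple_of_odd_of_even (by grind) (Nat.not_odd_iff_even.1 hij') hij))

variable {X : Type*} [ConditionallyCompleteLinearOrder X] [DenselyOrdered X] [MetricSpace X]
  [OrderTopology X] [CompactSpace X] {f : X → X} {x y c : X}

theorem not_separated_of_odd_of_even (hf : Continuous f) (hh : ¬ HasHorseshoe f)
    (hx : x ∈ chainRecurrentSet f) (hy : y ∈ chainRecurrentSet f) (hij : Odd (i + j))
    (hjk : Even (j + k)) (hlt : j < k) (hxi : c ≤ f^[i] x) (hxj : c ≤ f^[j] x)
    (hxk : f^[k] x < c) (hyi : f^[i] y < c) (hyj : f^[j] y < c) : f^[k] y < c := by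
  by_contra! hyk
  have hfx : f x ≠ x := fun h => (hxk.trans_le hxi).ne (by simp only [iterate_fixed h])
  have hfy : f y ≠ y := fun h => (hyi.trans_le hyk).ne (by simp only [iterate_fixed h])
  obtain ⟨p, hp, hpx⟩ := exists_isFixedPt_alternatesAbout hf hh hx hfx
  obtain ⟨q, hq, hqy⟩ := exists_isFixedPt_alternatesAbout hf hh hy hfy
  obtain ⟨n, rfl⟩ := Nat.exists_eq_add_of_lt hlt
  have hjn : j + n + 1 = (n + 1) + j := by ring
  refine hh (hasHorseshoe_of_alternatesAbout (n := n + 1) hf hp hq (hpx.iterate j) (hqy.iterate j)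
    (hpx.iterate_lt_of_odd_of_even hij hjk (hxk.trans_le hxi))
    (hqy.lt_iterate_of_odd_of_even hij hjk (hyi.trans_le hyk)) (by grind) n.succ_ne_zero
    (hyj.trans_le hxj) ?_)
  rw [← iterate_add_apply, ← iterate_add_apply, ← hjn]
  exact hxk.trans_le hyk

theorem not_separated_of_isDyadicTriple (hf : Continuous f) (hh : ¬ HasHorseshoe f)
    (hx : x ∈ chainRecurrentSet f) (hy : y ∈ chainRecurrentSet f) (h : IsDyadicTriple i j k)
    (hxi : c ≤ f^[i] x) (hxj : c ≤ f^[j] x) (hxk : f^[k] x < c) (hyi : f^[i] y < c)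
    (hyj : f^[j] y < c) : f^[k] y < c := by
  obtain ⟨v, m, d, e₁, e₂, rfl, rfl, rfl, hodd, heven, hlt⟩ := h
  have hf' := CompactSpace.uniformContinuous_of_continuous hf
  have hmem {z} (hz : z ∈ chainRecurrentSet f) : f^[m] z ∈ chainRecurrentSet f^[2 ^ v] :=
    chainRecurrentSet_subset_iterate hf' _ ((mapsTo_chainRecurrentSet hf').iterate m hz)
  have hiter (e : ℕ) (z : X) : f^[m + 2 ^ v * e] z = (f^[2 ^ v])^[e] (f^[m] z) := by
    rw [add_comm, iterate_add_apply, iterate_mul]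
  simp only [hiter] at hxi hxj hxk hyi hyj ⊢
  exact not_separated_of_odd_of_even (hf.iterate _) (fun h => hh h.of_iterate) (hmem hx) (hmem hy)
    hodd heven hlt hxi hxj hxk hyi hyj

end Separation

section CodeCount

theorem card_le_of_shatters_card_le_two {n : ℕ} {𝒜 : Finset (Finset (Fin n))}
    (h : ∀ s, 𝒜.Shatters s → s.card ≤ 2) : 𝒜.card ≤ (n + 1) ^ 2 := by
  have hvc : 𝒜.vcDim ≤ 2 := Finset.sup_le fun s hs => h s (Finset.mem_shatterer.1 hs)
  calc 𝒜.card ≤ 𝒜.shatterer.card := Finset.card_le_card_shatterer _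
    _ ≤ ∑ k ∈ Finset.Iic 𝒜.vcDim, (Fintype.card (Fin n)).choose k :=
        Finset.card_shatterer_le_sum_vcDim
    _ ≤ ∑ k ∈ Finset.Iic 2, n.choose k := by
        simpa only [Fintype.card_fin] using
          Finset.sum_le_sum_of_subset (Finset.Iic_subset_Iic.2 hvc)
    _ = 1 + n + n.choose 2 := by
        simp [show Finset.Iic 2 = ({0, 1, 2} : Finset ℕ) from rfl, add_assoc]
    _ ≤ 1 + n + n ^ 2 := by gcongr; exact Nat.choose_le_pow n 2
    _ ≤ (n + 1) ^ 2 := by nlinarith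

theorem seqCoverCountOn_le_card {X ι : Type*} {f : X → X} {Y : Set X} {a : ℕ → ℕ}
    {𝒰 : Finset (Set X)} {n : ℕ} {κ : X → ι} {T : Finset ι} (hT : MapsTo κ Y T)
    (hκ : ∀ x ∈ Y, ∀ i : Fin n, ∃ U ∈ 𝒰, ∀ y ∈ Y, κ y = κ x → f^[a i] y ∈ U) :
    seqCoverCountOn f Y a 𝒰 n ≤ T.card := by
  classical
  have hsub : (T.filter (· ∈ κ '' Y)).card ≤ T.card := Finset.card_filter_le _ _
  refine (Nat.sInf_le ?_).trans hsub
  choose! U hU hmem using hκ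
  have hrep (τ : T.filter (· ∈ κ '' Y)) : ∃ x ∈ Y, κ x = τ := (Finset.mem_filter.1 τ.2).2
  choose r hrY hr using hrep
  let e := (T.filter (· ∈ κ '' Y)).equivFin
  refine ⟨fun j i => U (r (e.symm j)) i, fun j i => hU _ (hrY _) i, fun y hy => ?_⟩
  have hτ : κ y ∈ T.filter (· ∈ κ '' Y) := Finset.mem_filter.2 ⟨hT hy, mem_image_of_mem κ hy⟩
  refine mem_iUnion.2 ⟨e ⟨κ y, hτ⟩, mem_iInter.2 fun i => ?_⟩
  have hyU := hmem _ (hrY _) i y hy (hr ⟨κ y, hτ⟩).symm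
  simpa only [mem_preimage, e.symm_apply_apply] using hyU

theorem seqEntropyOn_eq_zero_of_le_pow {X : Type*} [TopologicalSpace X] {f : X → X} {Y : Set X}
    {a : ℕ → ℕ} (h : ∀ 𝒰, IsOpenCoverOn Y 𝒰 → ∃ r, ∀ n, seqCoverCountOn f Y a 𝒰 n ≤ (n + 1) ^ r) :
    seqEntropyOn f Y a = 0 := by
  simp only [seqEntropyOn, ENNReal.iSup_eq_zero]
  intro 𝒰 h𝒰
  obtain ⟨r, hr⟩ := h 𝒰 h𝒰
  have hlim : Tendsto (fun n : ℕ => r * Real.log (n + 1) / n) atTop (𝓝 0) := by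
    have hlog := (Real.tendsto_pow_log_div_mul_add_atTop 1 (-1) 1 one_ne_zero).comp
      (tendsto_atTop_add_const_right atTop (1 : ℝ) tendsto_natCast_atTop_atTop)
    simpa [Function.comp_def, mul_div_assoc] using hlog.const_mul (r : ℝ)
  have hlog (n : ℕ) : Real.log (seqCoverCountOn f Y a 𝒰 n) ≤ r * Real.log (n + 1) := by
    rw [← Real.log_pow]
    rcases (seqCoverCountOn f Y a 𝒰 n).eq_zero_or_pos with h0 | h0
    · rw [h0, Nat.cast_zero, Real.log_zero]
      exact Real.log_nonneg (one_le_pow₀ (le_add_of_nonneg_left n.cast_nonneg))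
    · exact Real.log_le_log (Nat.cast_pos.2 h0) (mod_cast hr n)
  refine (tendsto_of_tendsto_of_tendsto_of_le_of_le tendsto_const_nhds
    (by simpa using ENNReal.tendsto_ofReal hlim) (fun _ => zero_le) fun n => ?_).limsup_eq
  exact ENNReal.ofReal_le_ofReal (div_le_div_of_nonneg_right (hlog n) n.cast_nonneg)

section LinearOrder

variable {X : Type*} [LinearOrder X]

/-- The set of indices `i < n` for which `f^[a i] x` lies on the right of the cut `c`. -/
def cutCode (f : X → X) (a : ℕ → ℕ) (n : ℕ) (c x : X) : Finset (Fin n) :=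
  {i | c ≤ f^[a i] x}

theorem mem_cutCode {f : X → X} {a : ℕ → ℕ} {n : ℕ} {c x : X} {i : Fin n} :
    i ∈ cutCode f a n c x ↔ c ≤ f^[a i] x := by
  simp [cutCode]

variable [TopologicalSpace X] [OrderTopology X] [DenselyOrdered X]

theorem exists_finset_cuts_of_mem_nhds {x : X} {U : Set X} (hU : U ∈ 𝓝 x) :
    ∃ C : Finset X, x ∉ C ∧ ∀ y, (∀ c ∈ C, c ≤ x ↔ c ≤ y) → y ∈ U := by
  classical
  obtain ⟨L, hxL, hL⟩ :
      ∃ L : Finset X, x ∉ L ∧ ∀ y ≤ x, (∀ c ∈ L, c ≤ x ↔ c ≤ y) → y ∈ U := by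
    by_cases hx : ∃ l, l < x
    · obtain ⟨l, hlx, hlU⟩ := exists_Ioc_subset_of_mem_nhds hU hx
      obtain ⟨m, hlm, hmx⟩ := exists_between hlx
      refine ⟨{m}, by simpa using hmx.ne', fun y hyx hy => hlU ⟨hlm.trans_le ?_, hyx⟩⟩
      exact (hy m (Finset.mem_singleton_self m)).1 hmx.le
    · push Not at hx
      exact ⟨∅, by simp, fun y hyx _ => (hyx.antisymm (hx y)) ▸ mem_of_mem_nhds hU⟩
  obtain ⟨R, hxR, hR⟩ :
      ∃ R : Finset X, x ∉ R ∧ ∀ y ≥ x, (∀ c ∈ R, c ≤ x ↔ c ≤ y) → y ∈ U := by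
    by_cases hx : ∃ r, x < r
    · obtain ⟨r, hxr, hrU⟩ := exists_Ico_subset_of_mem_nhds hU hx
      refine ⟨{r}, by simpa using hxr.ne, fun y hxy hy => hrU ⟨hxy, lt_of_not_ge ?_⟩⟩
      exact fun hry => hxr.not_ge ((hy r (Finset.mem_singleton_self r)).2 hry)
    · push Not at hx
      exact ⟨∅, by simp, fun y hxy _ => (hxy.antisymm (hx y)) ▸ mem_of_mem_nhds hU⟩
  refine ⟨L ∪ R, by simp [hxL, hxR], fun y hy => ?_⟩
  rcases le_total y x with hyx | hxy
  · exact hL y hyx fun c hc => hy c (Finset.mem_union_left _ hc)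
  · exact hR y hxy fun c hc => hy c (Finset.mem_union_right _ hc)

theorem exists_finset_cuts {Y : Set X} (hY : IsCompact Y) {𝒰 : Finset (Set X)}
    (h𝒰 : IsOpenCoverOn Y 𝒰) :
    ∃ C : Finset X, ∀ x ∈ Y, ∃ U ∈ 𝒰, ∀ y, (∀ c ∈ C, c ≤ x ↔ c ≤ y) → y ∈ U := by
  classical
  refine hY.induction_on (p := fun Z => ∃ C : Finset X, ∀ x ∈ Z, ∃ U ∈ 𝒰, ∀ y,
    (∀ c ∈ C, c ≤ x ↔ c ≤ y) → y ∈ U) ⟨∅, by simp⟩ ?_ ?_ ?_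
  · exact fun s t hst ⟨C, hC⟩ => ⟨C, fun x hx => hC x (hst hx)⟩
  · rintro s t ⟨C, hC⟩ ⟨D, hD⟩
    refine ⟨C ∪ D, ?_⟩
    rintro x (hx | hx)
    · obtain ⟨U, hU, h⟩ := hC x hx
      exact ⟨U, hU, fun y hy => h y fun c hc => hy c (Finset.mem_union_left _ hc)⟩
    · obtain ⟨U, hU, h⟩ := hD x hx
      exact ⟨U, hU, fun y hy => h y fun c hc => hy c (Finset.mem_union_right _ hc)⟩
  · intro x hx
    obtain ⟨U, hU, hxU⟩ := h𝒰.2 hx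
    obtain ⟨C, hxC, hC⟩ := exists_finset_cuts_of_mem_nhds ((h𝒰.1 U hU).mem_nhds hxU)
    have hsame : ∀ᶠ y in 𝓝 x, ∀ c ∈ C, c ≤ x ↔ c ≤ y := by
      refine (Finset.eventually_all C).2 fun c hc => ?_
      rcases (ne_of_mem_of_not_mem hc hxC).lt_or_gt with hcx | hxc
      · filter_upwards [Ioi_mem_nhds hcx] with y hy using iff_of_true hcx.le hy.le
      · filter_upwards [Iio_mem_nhds hxc] with y hy using iff_of_false hxc.not_ge hy.not_ge
    exact ⟨_, mem_nhdsWithin_of_mem_nhds hsame, C, fun z hz => ⟨U, hU, fun y hy =>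
      hC y fun c hc => (hz c hc).trans (hy c hc)⟩⟩

end LinearOrder

variable {X : Type*} [ConditionallyCompleteLinearOrder X] [DenselyOrdered X] [MetricSpace X]
  [OrderTopology X] [CompactSpace X] {f : X → X} {Y : Set X} {a : ℕ → ℕ}

theorem not_isDyadicTriple_of_shatters (hf : Continuous f) (hh : ¬ HasHorseshoe f)
    (hY : Y ⊆ chainRecurrentSet f) {n : ℕ} {c : X} {𝒜 : Finset (Finset (Fin n))}
    (h𝒜 : SurjOn (cutCode f a n c) Y 𝒜) {s : Finset (Fin n)} (hs : 𝒜.Shatters s) {i j k : Fin n}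
    (hi : i ∈ s) (hj : j ∈ s) (hk : k ∈ s) (hik : i ≠ k) (hjk : j ≠ k) :
    ¬ IsDyadicTriple (a i) (a j) (a k) := by
  intro h
  have hcode (t : Finset (Fin n)) (ht : t ⊆ s) :
      ∃ x ∈ Y, ∀ l ∈ s, c ≤ f^[a l] x ↔ l ∈ t := by
    obtain ⟨u, hu, rfl⟩ := hs ht
    obtain ⟨x, hx, rfl⟩ := h𝒜 hu
    exact ⟨x, hx, fun l hl => by simp [hl, mem_cutCode]⟩
  obtain ⟨x, hx, hxs⟩ := hcode {i, j} (by simp [Finset.insert_subset_iff, hi, hj])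
  obtain ⟨y, hy, hys⟩ := hcode {k} (by simp [hk])
  refine (not_separated_of_isDyadicTriple hf hh (c := c) (hY hx) (hY hy) h ?_ ?_ ?_ ?_ ?_).not_ge ?_
  · simp [hxs, hi]
  · simp [hxs, hj]
  · simp [← not_le, hxs, hk, hik.symm, hjk.symm]
  · simp [← not_le, hys, hi, hik]
  · simp [← not_le, hys, hj, hjk]
  · simp [hys, hk]

theorem card_le_two_of_shatters (hf : Continuous f) (hh : ¬ HasHorseshoe f)
    (hY : Y ⊆ chainRecurrentSet f) (ha : StrictMono a) {n : ℕ} {c : X}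
    {𝒜 : Finset (Finset (Fin n))} (h𝒜 : SurjOn (cutCode f a n c) Y 𝒜) {s : Finset (Fin n)}
    (hs : 𝒜.Shatters s) : s.card ≤ 2 := by
  by_contra! h
  obtain ⟨t, hts, ht⟩ := Finset.exists_subset_card_eq (n := 3) h
  let e := t.orderEmbOfFin ht
  have he l : e l ∈ s := hts (Finset.orderEmbOfFin_mem t ht l)
  have hij : e 0 < e 1 := e.strictMono (by decide)
  have hjk : e 1 < e 2 := e.strictMono (by decide)
  have hno {i j k} := not_isDyadicTriple_of_shatters hf hh hY h𝒜 hs (he i) (he j) (he k)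
  rcases isDyadicTriple_or_of_lt_of_lt (ha hij) (ha hjk) with h | h | h
  · exact hno (hij.trans hjk).ne hjk.ne h
  · exact hno hjk.ne (hij.trans hjk).ne h
  · exact hno hjk.ne' hij.ne h

theorem exists_seqCoverCountOn_le_pow (hf : Continuous f) (hh : ¬ HasHorseshoe f)
    (hYc : IsCompact Y) (hYf : MapsTo f Y Y) (hY : Y ⊆ chainRecurrentSet f) (ha : StrictMono a)
    {𝒰 : Finset (Set X)} (h𝒰 : IsOpenCoverOn Y 𝒰) :
    ∃ r, ∀ n, seqCoverCountOn f Y a 𝒰 n ≤ (n + 1) ^ r := by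
  classical
  obtain ⟨C, hC⟩ := exists_finset_cuts hYc h𝒰
  refine ⟨2 * C.card, fun n => ?_⟩
  let 𝒜 (c : C) : Finset (Finset (Fin n)) := (toFinite (cutCode f a n c '' Y)).toFinset
  have h𝒜 (c : C) : (𝒜 c).card ≤ (n + 1) ^ 2 := card_le_of_shatters_card_le_two fun s hs =>
    card_le_two_of_shatters hf hh hY ha (c := c) (by simp [𝒜, SurjOn]) hs
  calc seqCoverCountOn f Y a 𝒰 n ≤ (Fintype.piFinset 𝒜).card := by
        refine seqCoverCountOn_le_card (κ := fun x (c : C) => cutCode f a n c x) ?_ fun x hx i => ?_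
        · exact fun x hx => by simpa [𝒜] using fun c _ => ⟨x, hx, rfl⟩
        · obtain ⟨U, hU, h⟩ := hC _ (hYf.iterate (a i) hx)
          refine ⟨U, hU, fun y _ hyx => h _ fun c hc => ?_⟩
          rw [← mem_cutCode, ← mem_cutCode, congrFun hyx ⟨c, hc⟩]
    _ = ∏ c, (𝒜 c).card := Fintype.card_piFinset 𝒜
    _ ≤ ∏ _c : C, (n + 1) ^ 2 := Finset.prod_le_prod' fun c _ => h𝒜 c
    _ = (n + 1) ^ (2 * C.card) := by simp [pow_mul]

theorem supSeqEntropyOn_eq_zero_of_subset_chainRecurrentSet (hf : Continuous f)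
    (hh : ¬ HasHorseshoe f) (hYc : IsCompact Y) (hYf : MapsTo f Y Y)
    (hY : Y ⊆ chainRecurrentSet f) : supSeqEntropyOn f Y = 0 := by
  simp only [supSeqEntropyOn, ENNReal.iSup_eq_zero]
  exact fun a ha _ => seqEntropyOn_eq_zero_of_le_pow fun 𝒰 h𝒰 =>
    exists_seqCoverCountOn_le_pow hf hh hYc hYf hY ha h𝒰

end CodeCount

section OmegaLimit

section Topological

variable {X : Type*} [TopologicalSpace X] {f : X → X} {c : X}

theorem mem_omegaLimitSet_iff_mapClusterPt {x : X} :
    c ∈ omegaLimitSet f x ↔ MapClusterPt c atTop (fun k => f^[k] x) := by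
  simp only [omegaLimitSet, mem_iInter, mem_closure_iff_nhds, mapClusterPt_iff_frequently,
    frequently_atTop, inter_nonempty_iff_exists_right, exists_mem_image, mem_Ici]
  exact ⟨fun h s hs i => h i s hs, fun h i s hs => h s hs i⟩

theorem mapsTo_omegaSet (hf : Continuous f) :
    MapsTo f (omegaSet f) (omegaSet f) := by
  intro c hc
  obtain ⟨x, hx⟩ := mem_iUnion.1 hc
  rw [mem_omegaLimitSet_iff_mapClusterPt] at hx
  refine mem_iUnion.2 ⟨f x, mem_omegaLimitSet_iff_mapClusterPt.2 ?_⟩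
  simpa [comp_def, ← iterate_succ_apply'] using hx.continuousAt_comp hf.continuousAt

theorem mem_omegaSet_of_isPeriodicPt {n : ℕ} (hn : 0 < n) (hc : IsPeriodicPt f n c) :
    c ∈ omegaSet f := by
  refine mem_iUnion.2 ⟨c, mem_iInter.2 fun N => subset_closure ⟨n * N, ?_, ?_⟩⟩
  · exact Nat.le_mul_of_pos_left N hn
  · exact hc.mul_const N

theorem exists_iterate_mul_mem_of_mem_omegaSet {z : X} {U : Set X} (hU : IsOpen U)
    (hz : z ∈ omegaSet f) (hzU : z ∈ U) {n : ℕ} (hn : 0 < n) :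
    ∃ y ∈ U, ∃ m, 0 < m ∧ f^[n * m] y ∈ U := by
  obtain ⟨x, hx⟩ := mem_iUnion.1 hz
  have hinf : {k | f^[k] x ∈ U}.Infinite := Nat.frequently_atTop_iff_infinite.1
    ((mem_omegaLimitSet_iff_mapClusterPt.1 hx).frequently (hU.mem_nhds hzU))
  obtain ⟨i, hi, j, hj, hij, hmod⟩ :
      ∃ i, f^[i] x ∈ U ∧ ∃ j, f^[j] x ∈ U ∧ i < j ∧ i ≡ j [MOD n] := by
    obtain ⟨i, hi, j, hj, hne, hmod⟩ := hinf.exists_ne_map_eq_of_mapsTo (f := (· % n))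
      (fun k _ => Nat.mod_lt k hn) (finite_Iio n)
    rcases hne.lt_or_gt with hlt | hlt
    exacts [⟨i, hi, j, hj, hlt, hmod⟩, ⟨j, hj, i, hi, hlt, hmod.symm⟩]
  obtain ⟨m, hm⟩ := (Nat.modEq_iff_dvd' hij.le).1 hmod
  refine ⟨f^[i] x, hi, m, Nat.pos_of_ne_zero ?_, ?_⟩
  · rintro rfl
    omega
  · rwa [← iterate_add_apply, ← hm, Nat.sub_add_cancel hij.le]

end Topological

section Metric

variable {X : Type*} [MetricSpace X] {f : X → X} {c : X}

theorem omegaSet_subset_chainRecurrentSet (hf : UniformContinuous f) :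
    omegaSet f ⊆ chainRecurrentSet f := by
  intro c hc ε hε
  obtain ⟨x, hx⟩ := mem_iUnion.1 hc
  obtain ⟨δ, hδ, hperturb⟩ := EpsChain.perturb hf hε
  have hfreq := (mem_omegaLimitSet_iff_mapClusterPt.1 hx).frequently (Metric.ball_mem_nhds c hδ)
  obtain ⟨k, hk⟩ := hfreq.exists
  obtain ⟨m, hm, hkm⟩ := (hfreq.forall_exists_of_atTop (k + 1))
  obtain ⟨n, rfl⟩ := Nat.exists_eq_add_of_le' (Nat.le_of_succ_le hm)
  rw [iterate_add_apply] at hkm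
  exact hperturb c _ _ c (Metric.mem_ball'.1 hk) hkm (epsChain_iterate hδ (by lia))

theorem mem_omegaSet_of_forall_image_mem [CompactSpace X] (hf : Continuous f) {F : Filter X}
    [F.NeBot] (hF : F ≤ 𝓝 c) (h : ∀ S ∈ F, ∃ n, 0 < n ∧ f^[n] '' S ∈ F) : c ∈ omegaSet f := by
  choose! ν hν himage using h
  have hball (k : ℕ) : Metric.closedBall c (1 / (k + 1)) ∈ F :=
    hF (Metric.closedBall_mem_nhds c (by positivity))
  let J : ℕ → Set X := Nat.rec univ
    fun k S => f^[ν S] '' S ∩ Metric.closedBall c (1 / (k + 1))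
  have hJ (k : ℕ) : J k ∈ F := by
    induction k with
    | zero => exact univ_mem
    | succ k ih => exact inter_mem (himage _ ih) (hball k)
  obtain ⟨x, hx⟩ := exists_forall_iterate_mem_closure_of_surjOn hf
    (fun k => F.nonempty_of_mem (hJ k)) (n := fun k => ν (J k)) fun k => inter_subset_left
  refine mem_iUnion.2 ⟨x, mem_omegaLimitSet_iff_mapClusterPt.2 ?_⟩
  have hlim : Tendsto (fun k => f^[∑ i ∈ Finset.range (k + 1), ν (J i)] x) atTop (𝓝 c) := by
    refine tendsto_iff_dist_tendsto_zero.2 (squeeze_zero (fun _ => dist_nonneg) (fun k => ?_)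
      tendsto_one_div_add_atTop_nhds_zero_nat)
    exact closure_minimal inter_subset_right Metric.isClosed_closedBall (hx (k + 1))
  have hmono : StrictMono fun k => ∑ i ∈ Finset.range k, ν (J i) :=
    strictMono_nat_of_lt_succ fun k => by
      simpa only [Finset.sum_range_succ] using Nat.lt_add_of_pos_right (hν _ (hJ k))
  exact MapClusterPt.of_comp (hmono.tendsto_atTop.comp (tendsto_add_atTop_nat 1))
    hlim.mapClusterPt

end Metric

section Trapped

variable {X : Type*} [ConditionallyCompleteLinearOrder X] [TopologicalSpace X] [OrderTopology X]
  {g : X → X} {c l : X}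

theorem mem_or_eq_of_mem_closure {A : Set X} (hA : IsPreconnected A) (hbdd : BddBelow A)
    (hAc : A ⊆ Iio c) (hlc : l < c) (hlA : Ico l c ⊆ A) {z : X} (hz : z ∈ closure A) :
    z ∈ A ∨ z = sInf A ∨ z = c := by
  have hAI : A ⊆ Icc (sInf A) c := fun w hw => ⟨csInf_le hbdd hw, (hAc hw).le⟩
  have hzI : z ∈ Icc (sInf A) c := closure_minimal hAI isClosed_Icc hz
  rcases hzI.1.eq_or_lt with h | haz
  · exact Or.inr (Or.inl h.symm)
  rcases hzI.2.eq_or_lt with h | hzc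
  · exact Or.inr (Or.inr h)
  obtain ⟨u, hu, huz⟩ := exists_lt_of_csInf_lt ⟨l, hlA (left_mem_Ico.2 hlc)⟩ haz
  exact Or.inl (hA.Icc_subset hu (hlA ⟨le_max_right z l, max_lt hzc hlc⟩) ⟨huz.le, le_max_left z l⟩)

variable [CompactSpace X]

theorem apply_apply_eq_of_mem_closure_image (hg : Continuous g) {A : Set X} (hA : IsPreconnected A)
    (hgA : MapsTo g A A) (hAc : A ⊆ Iio c) (hlc : l < c) (hlA : Ico l c ⊆ A)
    (hAg : A ⊆ Ico l c ∪ g '' A) (hc : c ∈ closure (g '' A)) : g (g c) = c := by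
  have hl : l ∈ A := hlA (left_mem_Ico.2 hlc)
  have hbdd : BddBelow A := isClosed_closure.isCompact.bddBelow.mono subset_closure
  have hcl {z : X} (hz : z ∈ closure A) := mem_or_eq_of_mem_closure hA hbdd hAc hlc hlA hz
  set a := sInf A
  have himage : closure (g '' A) = g '' closure A :=
    (image_closure_of_isCompact isClosed_closure.isCompact hg.continuousOn).symm
  rw [himage] at hc
  obtain ⟨e, he, hge⟩ := hc
  rcases hcl he with heA | rfl | rfl
  · exact absurd hge (hAc (hgA heA)).ne
  · have haA : a ∉ A := fun h => (hAc (hgA h)).ne hge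
    have hal : a < l := (csInf_le hbdd hl).lt_of_ne fun h => haA (mem_of_eq_of_mem h hl)
    have hacl : a ∈ closure (Ico l c) ∪ g '' closure A := by
      rw [← himage, ← closure_union]
      exact closure_mono hAg he
    rcases hacl with h | ⟨e', he', hge'⟩
    · exact absurd (closure_minimal Ico_subset_Icc_self isClosed_Icc h).1 hal.not_ge
    rcases hcl he' with heA' | rfl | rfl
    · exact absurd (hge' ▸ hgA heA') haA
    · exact absurd (hge.symm.trans hge') (hal.trans hlc).ne'
    · rw [hge', hge]
  · rw [hge, hge]

theorem apply_apply_eq_of_forall_iterate_lt [DenselyOrdered X] (hg : Continuous g) {y : X}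
    (hy : y ∈ Ico l c) (hgy : g y ∈ Ico l c) (hlt : ∀ i, MapsTo g^[i] (Ico l c) (Iio c))
    (hc : c ∈ closure (⋃ i, g^[i + 1] '' Ico l c)) : g (g c) = c := by
  have himage : g '' ⋃ i, g^[i] '' Ico l c = ⋃ i, g^[i + 1] '' Ico l c := by
    simp only [image_iUnion, ← image_comp, iterate_succ']
  rw [← himage] at hc
  refine apply_apply_eq_of_mem_closure_image hg (IsPreconnected.iUnion_of_chain
    (fun i => isPreconnected_Ico.image _ (hg.iterate i).continuousOn) fun i => ?_) ?_
    (iUnion_subset fun i => (hlt i).image_subset) (hy.1.trans_lt hy.2) ?_ ?_ hc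
  · exact ⟨g^[i] (g y), ⟨g y, hgy, rfl⟩, ⟨y, hy, iterate_succ_apply g i y⟩⟩
  · rw [mapsTo_iff_image_subset, himage]
    exact iUnion_subset fun i => subset_iUnion_of_subset (i + 1) subset_rfl
  · exact subset_iUnion_of_subset 0 (image_id _).ge
  · rw [himage]
    refine iUnion_subset fun i => ?_
    cases i with
    | zero => exact (image_id _).le.trans subset_union_left
    | succ i =>
      exact subset_union_of_subset_right (subset_iUnion (fun i => g^[i + 1] '' Ico l c) i) _

end Trapped

variable {X : Type*} [ConditionallyCompleteLinearOrder X] [DenselyOrdered X] [MetricSpace X]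
  [OrderTopology X] [CompactSpace X] {f : X → X} {c : X}

theorem exists_forall_iterate_lt_of_notMem_omegaSet (hf : Continuous f) (hc : c ∉ omegaSet f)
    {b : X} (hb : b < c) : ∃ l < c, ∀ n, ∀ u ∈ Ico l c, f^[n] u < c →
      MapsTo f^[n] (Ico l c) (Iio c) := by
  have : (𝓝[<] c).NeBot := nhdsLT_neBot_of_exists_lt ⟨b, hb⟩
  obtain ⟨S, hS, hSf⟩ : ∃ S ∈ 𝓝[<] c, ∀ n, 0 < n → f^[n] '' S ∉ 𝓝[<] c := by
    by_contra! h
    exact hc (mem_omegaSet_of_forall_image_mem hf nhdsWithin_le_nhds h)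
  obtain ⟨l', hl', hlS⟩ := (mem_nhdsLT_iff_exists_Ioo_subset' hb).1 hS
  obtain ⟨l, hll, hlc⟩ := exists_between hl'
  refine ⟨l, hlc, fun n u hu hfu v hv => ?_⟩
  rcases n.eq_zero_or_pos with rfl | hn
  · exact hv.2
  refine lt_of_not_ge fun hcv => hSf n hn (mem_of_superset (Ioo_mem_nhdsLT hfu) ?_)
  calc Ioo (f^[n] u) c ⊆ Icc (f^[n] u) c := Ioo_subset_Icc_self
    _ ⊆ f^[n] '' Ico l c := surjOn_Icc_of_le_of_le (hf.iterate n) hu hv le_rfl hcv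
    _ ⊆ f^[n] '' S := image_mono ((Ico_subset_Ioo_left hll).trans hlS)

theorem mem_omegaSet_of_frequently_nhdsLT (hf : Continuous f)
    (h : ∃ᶠ z in 𝓝[<] c, z ∈ omegaSet f) : c ∈ omegaSet f := by
  by_contra hc
  have hrec {U : Set X} (hU : IsOpen U) (hUc : U ∈ 𝓝[<] c) {n : ℕ} (hn : 0 < n) :
      ∃ y ∈ U, ∃ m, 0 < m ∧ f^[n * m] y ∈ U := by
    obtain ⟨z, hz, hzU⟩ := (h.and_eventually hUc).exists
    exact exists_iterate_mul_mem_of_mem_omegaSet hU hz hzU hn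
  obtain ⟨b, -, hb⟩ := (h.and_eventually self_mem_nhdsWithin).exists
  obtain ⟨l, hlc, hl⟩ := exists_forall_iterate_lt_of_notMem_omegaSet hf hc hb
  obtain ⟨y, hy, n, hn, hfy⟩ := hrec isOpen_Ioo (Ioo_mem_nhdsLT hlc) one_pos
  replace hy := Ioo_subset_Ico_self hy
  replace hfy : f^[n] y ∈ Ico l c := Ioo_subset_Ico_self (by rwa [one_mul] at hfy)
  have hlt (i : ℕ) : MapsTo (f^[n])^[i] (Ico l c) (Iio c) := by
    induction i with
    | zero => exact fun v hv => hv.2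
    | succ i ih =>
      have hyc : (f^[n])^[i + 1] y < c := ih hfy
      rw [← iterate_mul] at hyc ⊢
      exact hl _ y hy hyc
  refine hc (mem_omegaSet_of_isPeriodicPt (n := n + n) (by omega) ((iterate_add_apply ..).trans
    (apply_apply_eq_of_forall_iterate_lt (hf.iterate n) hy hfy hlt ?_)))
  refine mem_closure_iff.2 fun U hU hcU => ?_
  obtain ⟨w, hw, m, hm, hfw⟩ := hrec (hU.inter isOpen_Ioo)
    (inter_mem (mem_nhdsWithin_of_mem_nhds (hU.mem_nhds hcU)) (Ioo_mem_nhdsLT hlc)) hn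
  obtain ⟨i, rfl⟩ := Nat.exists_eq_add_of_lt hm
  refine ⟨_, hfw.1, mem_iUnion.2 ⟨i, w, Ioo_subset_Ico_self hw.2, ?_⟩⟩
  rw [← iterate_mul, zero_add]

theorem isClosed_omegaSet (hf : Continuous f) : IsClosed (omegaSet f) := by
  refine isClosed_iff_frequently.2 fun c hc => ?_
  by_contra hcω
  have hne : ∃ᶠ z in 𝓝[<] c ⊔ 𝓝[>] c, z ∈ omegaSet f := by
    rw [nhdsLT_sup_nhdsGT, frequently_nhdsWithin_iff]
    exact hc.mono fun z hz => ⟨hz, ne_of_mem_of_not_mem hz hcω⟩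
  rcases frequently_sup.1 hne with h | h
  · exact hcω (mem_omegaSet_of_frequently_nhdsLT hf h)
  · exact hcω (mem_omegaSet_of_frequently_nhdsLT (X := Xᵒᵈ) hf h)

end OmegaLimit

section OrderPullback

variable {X Y : Type*}

/-- The conditionally complete linear order on `X` that makes the bijection `e : X ≃ Y` an order
isomorphism. It is not an instance: it serves to order a space that is only known to be homeomorphic
to an ordered one. -/
noncomputable abbrev conditionallyCompleteLinearOrderOfEquiv [ConditionallyCompleteLinearOrder Y]
    (e : X ≃ Y) : ConditionallyCompleteLinearOrder X :=
  letI : LinearOrder X := LinearOrder.lift' e e.injective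
  let o : X ≃o Y := ⟨e, Iff.rfl⟩
  { (inferInstance : LinearOrder X), (inferInstance : Lattice X) with
    sSup := fun s => o.symm (sSup (o '' s))
    sInf := fun s => o.symm (sInf (o '' s))
    isLUB_csSup := fun s hs hb => o.isLUB_image.1 (isLUB_csSup (hs.image o) (o.bddAbove_image.2 hb))
    isGLB_csInf := fun s hs hb => o.isGLB_image.1 (isGLB_csInf (hs.image o) (o.bddBelow_image.2 hb))
    csSup_of_not_bddAbove := fun s hb => by
      rw [csSup_of_not_bddAbove (mt o.bddAbove_image.1 hb), image_empty]
    csInf_of_not_bddBelow := fun s hb => by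
      rw [csInf_of_not_bddBelow (mt o.bddBelow_image.1 hb), image_empty] }

theorem orderTopology_of_isInducing_orderIso [Preorder X] [Preorder Y] [TopologicalSpace X]
    [TopologicalSpace Y] [OrderTopology Y] (e : X ≃o Y) (he : IsInducing e) : OrderTopology X := by
  obtain rfl := he.eq_induced
  exact induced_orderTopology' e e.lt_iff_lt
    (fun {_ x} h => ⟨e.symm x, e.symm_apply_lt.2 h, (e.apply_symm_apply x).ge⟩)
    (fun {_ x} h => ⟨e.symm x, e.lt_symm_apply.2 h, (e.apply_symm_apply x).le⟩)

end OrderPullback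

/-- A zero topological entropy continuous interval map has zero topological
sequence entropy when restricted to its ω-limit set, its non-wandering set and its chain
recurrent set. -/
theorem seqEntropy_interval_restrictions_eq_zero {X : Type*} [MetricSpace X]
    (hX : Nonempty (X ≃ₜ Set.Icc (0 : ℝ) 1)) (f : X → X) (hf : Continuous f)
    (h0 : topEntropy f = 0) :
    supSeqEntropyOn f (omegaSet f) = 0 ∧ supSeqEntropyOn f (nonWanderingSet f) = 0 ∧
      supSeqEntropyOn f (chainRecurrentSet f) = 0 := by
  obtain ⟨φ⟩ := hX
  let := conditionallyCompleteLinearOrderOfEquiv φ.toEquiv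
  let o : X ≃o Icc (0 : ℝ) 1 := ⟨φ.toEquiv, Iff.rfl⟩
  have : DenselyOrdered X := (denselyOrdered_iff_of_orderIsoClass o).2 inferInstance
  have : OrderTopology X := orderTopology_of_isInducing_orderIso o φ.isInducing
  have : CompactSpace X := φ.symm.compactSpace
  have hfu : UniformContinuous f := CompactSpace.uniformContinuous_of_continuous hf
  have hh : ¬ HasHorseshoe f := fun h => h.topEntropy_ne_zero h0
  have key {Y : Set X} (hYc : IsClosed Y) (hYf : MapsTo f Y Y) (hY : Y ⊆ chainRecurrentSet f) :
      supSeqEntropyOn f Y = 0 :=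
    supSeqEntropyOn_eq_zero_of_subset_chainRecurrentSet hf hh hYc.isCompact hYf hY
  exact ⟨
    key (isClosed_omegaSet hf) (mapsTo_omegaSet hf) (omegaSet_subset_chainRecurrentSet hfu),
    key isClosed_nonWanderingSet (mapsTo_nonWanderingSet hf)
      (nonWanderingSet_subset_chainRecurrentSet hfu),
    key (isClosed_chainRecurrentSet hfu) (mapsTo_chainRecurrentSet hfu) Subset.rfl⟩
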